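/- Let n ≥ 2, let K, T ⊆ ℝⁿ be convex bodies, and let λ ∈ (0, 1) with λ ≠ 1/2. Then vol(λ∂K + (1−λ)∂T) · vol(λ∂T + (1−λ)∂K) = vol(K)·vol(T)·(1 − |1 − 2λ|ⁿ)² holds if and only if either K and T are translates of a common centrally-symmetric convex body (a body C with −C a translate of C), or n = 2 and K and T are translates of homothets (positive dilates) of a common centrally-symmetric convex body. -/

import Mathlib

open MeasureTheory Pointwise

/-!
A point `x` lies in `∂P + ∂Q` iff the bodies `P` and `x - Q` meet and neither is contained in the
interior of the other, because boundaries of convex bodies are connected in dimension at least two.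
So the volume of `∂P + ∂Q` is that of `P + Q` minus those of the Minkowski differences
`int P ⊖ (-Q)` and `int Q ⊖ (-P)`. With `p`, `q` the `n`-th roots of the volumes of `P`, `Q`,
Brunn–Minkowski bounds it below by `F(p, q) = (p + q)ⁿ - |p - q|ⁿ`; if `p ≠ q`, equality holds iff
`P` and `Q` are homothetic and centrally symmetric. Take `P = aK`, `Q = bT` and then `P = aT`,
`Q = bK`. By a Cauchy–Schwarz argument on the binomial expansion of `F`, the product of the two
bounds is at least `vol K · vol T · F(a, b)²`, strictly so unless `n = 2` or `vol K = vol T`.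

The equality case of Brunn–Minkowski comes from perturbing the constant functions in the
Prékopa–Leindler inequality on bodies `K`, `T` with centroids at the origin such that `K`, `T` and
`aK + bT` (`a + b = 1`) have equal volumes. For a functional `u`, the perturbation `(1 + √s u)²`
shows that the second moment of `u` on `aK + bT` is at least the mean of those on `K` and `T`. If
`u ≤ c` on `T`, then perturbing by `(δ / a) (u - c)⁺ - u²` on `K` and by `-u²` on `T` bounds
`δ ∫ (u - c)⁺` over `K` by a multiple of `δ²`. Hence this integral vanishes and `u ≤ c` on `K` too,
so `K ⊆ T` by Hahn–Banach.
-/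

open Filter Module Set Topology
open scoped ENNReal

section PrekopaLeindler

theorem volume_add_volume_le_volume_add_of_isCompact {A B : Set ℝ} (hA : IsCompact A)
    (hB : IsCompact B) (hA₀ : A.Nonempty) (hB₀ : B.Nonempty) :
    volume A + volume B ≤ volume (A + B) := by
  obtain ⟨M, hMA, hM⟩ := hA.exists_isGreatest hA₀
  obtain ⟨m, hmB, hm⟩ := hB.exists_isLeast hB₀
  have h_inter : (m +ᵥ A) ∩ (M +ᵥ B) ⊆ {M + m} := by
    rintro _ ⟨⟨x, hx, rfl⟩, y, hy, h⟩
    have hxM := hM hx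
    have hmy := hm hy
    simp only [vadd_eq_add, mem_singleton_iff] at h ⊢
    linarith
  have h_union : (m +ᵥ A) ∪ (M +ᵥ B) ⊆ A + B := by
    rintro _ (⟨x, hx, rfl⟩ | ⟨y, hy, rfl⟩)
    · simpa only [vadd_eq_add, add_comm] using add_mem_add hx hmB
    · exact add_mem_add hMA hy
  calc volume A + volume B = volume (m +ᵥ A) + volume (M +ᵥ B) := by simp only [measure_vadd]
    _ = volume ((m +ᵥ A) ∪ (M +ᵥ B)) :=
      (measure_union₀ (hB.vadd M).measurableSet.nullMeasurableSet
        (measure_mono_null h_inter (measure_singleton _))).symm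
    _ ≤ volume (A + B) := measure_mono h_union

theorem volume_add_volume_le_volume_add {A B : Set ℝ} (hA : MeasurableSet A)
    (hB : MeasurableSet B) (hA₀ : A.Nonempty) (hB₀ : B.Nonempty) :
    volume A + volume B ≤ volume (A + B) := by
  obtain ⟨x, hx⟩ := hA₀
  obtain ⟨y, hy⟩ := hB₀
  rw [hA.measure_eq_iSup_isCompact, hB.measure_eq_iSup_isCompact]
  simp_rw [iSup_and']
  refine ENNReal.biSup_add_biSup_le' (p := fun K ↦ K ⊆ A ∧ IsCompact K)
    (q := fun L ↦ L ⊆ B ∧ IsCompact L) ⟨∅, empty_subset _, isCompact_empty⟩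
    ⟨∅, empty_subset _, isCompact_empty⟩ fun K hK L hL ↦ ?_
  calc volume K + volume L
      ≤ volume (insert x K) + volume (insert y L) := by gcongr <;> exact subset_insert _ _
    _ ≤ volume (insert x K + insert y L) :=
      volume_add_volume_le_volume_add_of_isCompact (hK.2.insert x) (hL.2.insert y)
        (insert_nonempty x K) (insert_nonempty y L)
    _ ≤ volume (A + B) := measure_mono (add_subset_add (insert_subset hx hK.1)
        (insert_subset hy hL.1))

theorem lintegral_eq_lintegral_measure_ofReal_lt {α : Type*} [MeasurableSpace α] (μ : Measure α)
    [SFinite μ] {f : α → ℝ≥0∞} (hf : Measurable f) :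
    ∫⁻ x, f x ∂μ = ∫⁻ t in Ioi (0 : ℝ), μ {x | ENNReal.ofReal t < f x} := by
  have h_slice (y : ℝ≥0∞) : volume.restrict (Ioi 0) {t : ℝ | ENNReal.ofReal t < y} = y := by
    rw [Measure.restrict_apply (measurableSet_lt ENNReal.measurable_ofReal measurable_const)]
    induction y with
    | top => simp
    | coe r =>
      have : {t : ℝ | ENNReal.ofReal t < r} ∩ Ioi 0 = Ioo 0 (r : ℝ) := by
        ext t
        rw [inter_comm]
        refine and_congr_right fun (ht : 0 < t) ↦ ?_
        rw [mem_ofPred_eq, ← ENNReal.ofReal_coe_nnreal,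
          ENNReal.ofReal_lt_ofReal_iff_of_nonneg ht.le]
      simp [this]
  have h_meas : MeasurableSet {p : α × ℝ | ENNReal.ofReal p.2 < f p.1} :=
    measurableSet_lt (by fun_prop) (by fun_prop)
  calc ∫⁻ x, f x ∂μ = (μ.prod (volume.restrict (Ioi 0))) {p | ENNReal.ofReal p.2 < f p.1} := by
        rw [Measure.prod_apply h_meas]
        exact lintegral_congr fun x ↦ (h_slice (f x)).symm
    _ = ∫⁻ t in Ioi (0 : ℝ), μ {x | ENNReal.ofReal t < f x} := Measure.prod_apply_symm h_meas

variable {a b : ℝ}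

theorem ennreal_geom_mean_le_arith_mean2_weighted (ha : 0 < a) (hb : 0 < b) (hab : a + b = 1)
    (x y : ℝ≥0∞) : x ^ a * y ^ b ≤ ENNReal.ofReal a * x + ENNReal.ofReal b * y := by
  have h_conj : (a⁻¹).HolderConjugate b⁻¹ :=
    Real.holderConjugate_iff.2 ⟨(one_lt_inv₀ ha).2 (by linarith), by simpa using hab⟩
  simpa [← ENNReal.rpow_mul, ha.ne', hb.ne', ENNReal.ofReal_inv_of_pos, ha, hb, div_eq_mul_inv,
    mul_comm] using ENNReal.young_inequality (x ^ a) (y ^ b) h_conj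

variable {f g h : ℝ → ℝ≥0∞}

theorem lintegral_weighted_add_le_of_iSup_eq_one (ha : 0 < a) (hb : 0 < b) (hab : a + b = 1)
    (hf : Measurable f) (hg : Measurable g) (hh : Measurable h) (hf₁ : ⨆ x, f x = 1)
    (hg₁ : ⨆ x, g x = 1) (hfgh : ∀ x y, f x ^ a * g y ^ b ≤ h (a • x + b • y)) :
    ENNReal.ofReal a * (∫⁻ x, f x) + ENNReal.ofReal b * (∫⁻ x, g x) ≤ ∫⁻ x, h x := by
  have h_anti (k : ℝ → ℝ≥0∞) : Measurable fun t ↦ volume {x | ENNReal.ofReal t < k x} :=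
    Antitone.measurable fun s t hst ↦ measure_mono fun x (hx : ENNReal.ofReal t < k x) ↦
      (ENNReal.ofReal_le_ofReal hst).trans_lt hx
  rw [lintegral_eq_lintegral_measure_ofReal_lt _ hf, lintegral_eq_lintegral_measure_ofReal_lt _ hg,
    lintegral_eq_lintegral_measure_ofReal_lt _ hh, ← lintegral_const_mul _ (h_anti f),
    ← lintegral_const_mul _ (h_anti g), ← lintegral_add_left ((h_anti f).const_mul _)]
  refine setLIntegral_mono' measurableSet_Ioi fun t _ ↦ ?_
  have h_meas {k : ℝ → ℝ≥0∞} (hk : Measurable k) : MeasurableSet {x | ENNReal.ofReal t < k x} :=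
    measurableSet_lt measurable_const hk
  rcases lt_or_ge (ENNReal.ofReal t) 1 with ht₁ | ht₁
  · have h_nonempty {k : ℝ → ℝ≥0∞} (hk : ⨆ x, k x = 1) :
        {x | ENNReal.ofReal t < k x}.Nonempty := by
      rwa [← hk, lt_iSup_iff] at ht₁
    have h_subset : a • {x | ENNReal.ofReal t < f x} + b • {x | ENNReal.ofReal t < g x} ⊆
        {x | ENNReal.ofReal t < h x} := by
      rintro _ ⟨_, ⟨x, hx, rfl⟩, _, ⟨y, hy, rfl⟩, rfl⟩
      refine lt_of_lt_of_le ?_ (hfgh x y)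
      calc ENNReal.ofReal t = ENNReal.ofReal t ^ a * ENNReal.ofReal t ^ b := by
            rw [← ENNReal.rpow_add_of_nonneg _ _ ha.le hb.le, hab, ENNReal.rpow_one]
        _ < f x ^ a * g y ^ b := ENNReal.mul_lt_mul (ENNReal.rpow_lt_rpow hx ha)
          (ENNReal.rpow_lt_rpow hy hb)
    calc _ = volume (a • {x | ENNReal.ofReal t < f x}) +
          volume (b • {x | ENNReal.ofReal t < g x}) := by
          simp [Measure.addHaar_smul, abs_of_pos ha, abs_of_pos hb]
      _ ≤ volume (a • {x | ENNReal.ofReal t < f x} + b • {x | ENNReal.ofReal t < g x}) :=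
        volume_add_volume_le_volume_add ((h_meas hf).const_smul₀ a) ((h_meas hg).const_smul₀ b)
          (h_nonempty hf₁).smul_set (h_nonempty hg₁).smul_set
      _ ≤ _ := measure_mono h_subset
  · have h_empty {k : ℝ → ℝ≥0∞} (hk : ⨆ x, k x = 1) : {x | ENNReal.ofReal t < k x} = ∅ :=
      eq_empty_of_forall_notMem fun x hx ↦ (hx.trans_le (hk ▸ le_iSup k x)).not_ge ht₁
    simp [h_empty hf₁, h_empty hg₁]

theorem lintegral_rpow_mul_lintegral_rpow_le_of_iSup_ne_top (ha : 0 < a) (hb : 0 < b)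
    (hab : a + b = 1) (hf : Measurable f) (hg : Measurable g) (hh : Measurable h)
    (hf_top : ⨆ x, f x ≠ ⊤) (hg_top : ⨆ x, g x ≠ ⊤)
    (hfgh : ∀ x y, f x ^ a * g y ^ b ≤ h (a • x + b • y)) :
    (∫⁻ x, f x) ^ a * (∫⁻ x, g x) ^ b ≤ ∫⁻ x, h x := by
  set S := ⨆ x, f x
  set R := ⨆ x, g x
  rcases eq_or_ne S 0 with hS₀ | hS₀
  · simp [ENNReal.iSup_eq_zero.1 hS₀, ha]
  rcases eq_or_ne R 0 with hR₀ | hR₀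
  · simp [ENNReal.iSup_eq_zero.1 hR₀, hb]
  have hSa₀ : S ^ a ≠ 0 := by simp [hS₀, hf_top]
  have hSa_top : S ^ a ≠ ⊤ := ENNReal.rpow_ne_top_of_nonneg ha.le hf_top
  have hRb₀ : R ^ b ≠ 0 := by simp [hR₀, hg_top]
  have hRb_top : R ^ b ≠ ⊤ := ENNReal.rpow_ne_top_of_nonneg hb.le hg_top
  have h_div (x y : ℝ≥0∞) : (x / S) ^ a * (y / R) ^ b = x ^ a * y ^ b / (S ^ a * R ^ b) := by
    simp only [div_eq_mul_inv]
    rw [ENNReal.mul_rpow_of_nonneg _ _ ha.le, ENNReal.mul_rpow_of_nonneg _ _ hb.le,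
      ENNReal.inv_rpow, ENNReal.inv_rpow, mul_mul_mul_comm,
      ← ENNReal.mul_inv (.inl hSa₀) (.inl hSa_top)]
  have h_lintegral {k : ℝ → ℝ≥0∞} (hk : Measurable k) (D : ℝ≥0∞) :
      ∫⁻ x, k x / D = (∫⁻ x, k x) / D := by
    simp only [div_eq_mul_inv, lintegral_mul_const _ hk]
  have h_normalized : (∫⁻ x, f x) ^ a * (∫⁻ x, g x) ^ b / (S ^ a * R ^ b) ≤
      (∫⁻ x, h x) / (S ^ a * R ^ b) := by
    rw [← h_div, ← h_lintegral hf, ← h_lintegral hg, ← h_lintegral hh]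
    refine (ennreal_geom_mean_le_arith_mean2_weighted ha hb hab _ _).trans
      (lintegral_weighted_add_le_of_iSup_eq_one ha hb hab (hf.div_const S) (hg.div_const R)
        (hh.div_const _) ?_ ?_ fun x y ↦ ?_)
    · rw [← ENNReal.iSup_div, ENNReal.div_self hS₀ hf_top]
    · rw [← ENNReal.iSup_div, ENNReal.div_self hR₀ hg_top]
    · rw [h_div]
      gcongr
      exact hfgh x y
  have hD₀ : S ^ a * R ^ b ≠ 0 := mul_ne_zero hSa₀ hRb₀
  have hD_top : S ^ a * R ^ b ≠ ⊤ := ENNReal.mul_ne_top hSa_top hRb_top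
  rwa [ENNReal.div_le_iff hD₀ hD_top, ENNReal.div_mul_cancel hD₀ hD_top] at h_normalized

/-- The Prékopa–Leindler inequality for the measure `μ`, with weights `a` and `b`. As a predicate
on `μ` it is stable under products, linear images and scaling, which is how it passes from the line
to all Haar measures. -/
def PrekopaLeindler {E : Type*} [AddCommGroup E] [Module ℝ E] [MeasurableSpace E] (a b : ℝ)
    (μ : Measure E) : Prop :=
  ∀ ⦃f g h : E → ℝ≥0∞⦄, Measurable f → Measurable g → Measurable h →
    (∀ x y, f x ^ a * g y ^ b ≤ h (a • x + b • y)) →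
    (∫⁻ x, f x ∂μ) ^ a * (∫⁻ x, g x ∂μ) ^ b ≤ ∫⁻ x, h x ∂μ

theorem prekopaLeindler_real (ha : 0 < a) (hb : 0 < b) (hab : a + b = 1) :
    PrekopaLeindler a b (volume : Measure ℝ) := by
  intro f g h hf hg hh hfgh
  rcases eq_or_ne (∫⁻ x, f x) 0 with hf₀ | hf₀
  · simp [hf₀, ha]
  rcases eq_or_ne (∫⁻ x, g x) 0 with hg₀ | hg₀
  · simp [hg₀, hb]
  have h_tendsto {k : ℝ → ℝ≥0∞} (hk : Measurable k) :
      Tendsto (fun N : ℕ ↦ ∫⁻ x, min (k x) N) atTop (𝓝 (∫⁻ x, k x)) := by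
    refine lintegral_tendsto_of_tendsto_of_monotone
      (fun N ↦ (hk.min measurable_const).aemeasurable)
      (.of_forall fun x N M hNM ↦ min_le_min_left _ (by exact_mod_cast hNM))
      (.of_forall fun x ↦ ?_)
    simpa using (tendsto_const_nhds (x := k x)).min ENNReal.tendsto_nat_nhds_top
  have h_bounded (k : ℝ → ℝ≥0∞) (N : ℕ) : ⨆ x, min (k x) N ≠ ⊤ :=
    ne_top_of_le_ne_top (ENNReal.natCast_ne_top N) (iSup_le fun x ↦ min_le_right _ _)
  have h_truncated (N : ℕ) :
      (∫⁻ x, min (f x) N) ^ a * (∫⁻ x, min (g x) N) ^ b ≤ ∫⁻ x, h x :=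
    lintegral_rpow_mul_lintegral_rpow_le_of_iSup_ne_top ha hb hab (hf.min measurable_const)
      (hg.min measurable_const) hh (h_bounded f N) (h_bounded g N)
      fun x y ↦ le_trans (by gcongr <;> exact min_le_left _ _) (hfgh x y)
  refine le_of_tendsto' (ENNReal.Tendsto.mul ((h_tendsto hf).ennrpow_const a) (.inl ?_)
    ((h_tendsto hg).ennrpow_const b) (.inl ?_)) h_truncated
  · simp [hf₀, ha.le]
  · simp [hg₀, hb.le]

namespace PrekopaLeindler

variable {E F : Type*} [AddCommGroup E] [Module ℝ E] [MeasurableSpace E]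
  [AddCommGroup F] [Module ℝ F] [MeasurableSpace F] {μ : Measure E} {ν : Measure F}

theorem prod [SFinite ν] (hμ : PrekopaLeindler a b μ) (hν : PrekopaLeindler a b ν) :
    PrekopaLeindler a b (μ.prod ν) := by
  intro f g h hf hg hh hfgh
  rw [lintegral_prod _ hf.aemeasurable, lintegral_prod _ hg.aemeasurable,
    lintegral_prod _ hh.aemeasurable]
  refine hμ hf.lintegral_prod_right' hg.lintegral_prod_right' hh.lintegral_prod_right' fun s t ↦
    hν (hf.comp measurable_prodMk_left) (hg.comp measurable_prodMk_left)
      (hh.comp measurable_prodMk_left) fun x y ↦ hfgh (s, x) (t, y)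

theorem map (hμ : PrekopaLeindler a b μ) {e : E →ₗ[ℝ] F} (he : Measurable e) :
    PrekopaLeindler a b (μ.map e) := by
  intro f g h hf hg hh hfgh
  rw [lintegral_map hf he, lintegral_map hg he, lintegral_map hh he]
  refine hμ (hf.comp he) (hg.comp he) (hh.comp he) fun x y ↦ ?_
  simpa using hfgh (e x) (e y)

theorem smul (ha : 0 < a) (hb : 0 < b) (hab : a + b = 1) (hμ : PrekopaLeindler a b μ) (c : ℝ≥0∞) :
    PrekopaLeindler a b (c • μ) := by
  intro f g h hf hg hh hfgh
  simp only [lintegral_smul_measure, smul_eq_mul]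
  calc (c * ∫⁻ x, f x ∂μ) ^ a * (c * ∫⁻ x, g x ∂μ) ^ b
      = c ^ (a + b) * ((∫⁻ x, f x ∂μ) ^ a * (∫⁻ x, g x ∂μ) ^ b) := by
        rw [ENNReal.mul_rpow_of_nonneg _ _ ha.le, ENNReal.mul_rpow_of_nonneg _ _ hb.le,
          ENNReal.rpow_add_of_nonneg _ _ ha.le hb.le, mul_mul_mul_comm]
    _ ≤ c * ∫⁻ x, h x ∂μ := by
        rw [hab, ENNReal.rpow_one]
        gcongr
        exact hμ hf hg hh hfgh

end PrekopaLeindler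

theorem prekopaLeindler_pi (ha : 0 < a) (hb : 0 < b) (hab : a + b = 1) (n : ℕ) :
    PrekopaLeindler a b (volume : Measure (Fin n → ℝ)) := by
  induction n with
  | zero =>
    intro f g h _ _ _ hfgh
    simp_rw [volume_pi, Measure.pi_of_empty _ (0 : Fin 0 → ℝ), lintegral_dirac]
    exact (hfgh 0 0).trans_eq (congrArg h (Subsingleton.elim _ _))
  | succ n ih =>
    have h_cons :
        MeasurePreserving (Fin.consLinearEquiv ℝ fun _ : Fin (n + 1) ↦ ℝ).toLinearMap := by
      convert (volume_preserving_piFinSuccAbove (fun _ : Fin (n + 1) ↦ ℝ) 0).symm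
      exact funext fun p ↦ (Fin.insertNth_zero' p.1 p.2).symm
    rw [← h_cons.map_eq]
    exact ((prekopaLeindler_real ha hb hab).prod ih).map h_cons.measurable

theorem prekopaLeindler_of_isAddHaarMeasure {E : Type*} [NormedAddCommGroup E] [NormedSpace ℝ E]
    [FiniteDimensional ℝ E] [MeasurableSpace E] [BorelSpace E] (μ : Measure E)
    [μ.IsAddHaarMeasure] (ha : 0 < a) (hb : 0 < b) (hab : a + b = 1) : PrekopaLeindler a b μ := by
  let e := (finBasis ℝ E).equivFunL.symm
  rw [Measure.isAddLeftInvariant_eq_smul μ (volume.map e)]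
  exact ((prekopaLeindler_pi ha hb hab _).map (e := e.toLinearMap)
    e.continuous.measurable).smul ha hb hab _

end PrekopaLeindler

section ConvexBody

variable {E : Type*} [NormedAddCommGroup E] [NormedSpace ℝ E]

/-- A convex body, i.e. a compact convex set with nonempty interior. (Mathlib's bundled
`ConvexBody` only asks for the set itself to be nonempty.) -/
structure IsConvexBody (K : Set E) : Prop where
  isCompact : IsCompact K
  convex : Convex ℝ K
  interior_nonempty : (interior K).Nonempty

theorem isConvexBody_iff {K : Set E} :
    IsConvexBody K ↔ IsCompact K ∧ Convex ℝ K ∧ (interior K).Nonempty :=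
  ⟨fun h ↦ ⟨h.isCompact, h.convex, h.interior_nonempty⟩, fun h ↦ ⟨h.1, h.2.1, h.2.2⟩⟩

namespace IsConvexBody

variable {K L : Set E}

theorem nonempty (hK : IsConvexBody K) : K.Nonempty :=
  hK.interior_nonempty.mono interior_subset

theorem vadd (hK : IsConvexBody K) (x : E) : IsConvexBody (x +ᵥ K) where
  isCompact := hK.isCompact.vadd x
  convex := hK.convex.vadd x
  interior_nonempty := by
    rw [interior_vadd]
    exact hK.interior_nonempty.vadd_set

theorem smul (hK : IsConvexBody K) {r : ℝ} (hr : r ≠ 0) : IsConvexBody (r • K) where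
  isCompact := hK.isCompact.smul r
  convex := hK.convex.smul r
  interior_nonempty := by
    rw [interior_smul₀ hr]
    exact hK.interior_nonempty.smul_set

theorem neg (hK : IsConvexBody K) : IsConvexBody (-K) := by
  simpa only [Set.neg_smul_set, one_smul] using hK.smul (neg_ne_zero.2 one_ne_zero)

theorem subset_of_interior_subset (hK : IsConvexBody K) {A : Set E} (hA : IsClosed A)
    (h : interior K ⊆ A) : K ⊆ A :=
  calc K ⊆ closure K := subset_closure
    _ = closure (interior K) :=
      (hK.convex.closure_interior_eq_closure_of_nonempty_interior hK.interior_nonempty).symm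
    _ ⊆ A := closure_minimal h hA

variable [MeasurableSpace E] {μ : Measure E} [μ.IsOpenPosMeasure]

theorem measureReal_pos [IsFiniteMeasureOnCompacts μ] (hK : IsConvexBody K) : 0 < μ.real K :=
  ENNReal.toReal_pos (Measure.measure_pos_of_nonempty_interior μ hK.interior_nonempty).ne'
    hK.isCompact.measure_lt_top.ne

theorem subset_of_measure_sdiff_eq_zero (hK : IsConvexBody K) {A : Set E} (hA : IsClosed A)
    (h : μ (K \ A) = 0) : K ⊆ A := by
  refine hK.subset_of_interior_subset hA (sdiff_eq_empty.1 ?_)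
  rw [← (isOpen_interior.sdiff hA).measure_eq_zero_iff μ]
  exact measure_mono_null (sdiff_subset_sdiff_left interior_subset) h

theorem eq_of_subset_of_measureReal_le [OpensMeasurableSpace E] [IsFiniteMeasureOnCompacts μ]
    (hK : IsConvexBody K) {A : Set E} (hA : IsCompact A) (hAK : A ⊆ K)
    (h : μ.real K ≤ μ.real A) : A = K := by
  refine hAK.antisymm (hK.subset_of_measure_sdiff_eq_zero (μ := μ) hA.isClosed ?_)
  have hK_top : μ K ≠ ⊤ := hK.isCompact.measure_lt_top.ne
  refine (measureReal_eq_zero_iff (measure_ne_top_of_subset sdiff_subset hK_top)).1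
    (le_antisymm ?_ measureReal_nonneg)
  rw [measureReal_sdiff hAK hA.measurableSet hK_top]
  linarith

end IsConvexBody

end ConvexBody

section PrekopaLeindlerEquality

variable {E : Type*} [NormedAddCommGroup E] [NormedSpace ℝ E] {a b v : ℝ}

theorem weighted_add_le_of_eventually_rpow_mul_rpow_le {A B C : ℝ} (hab : a + b = 1) (hv : 0 < v)
    (h : ∀ᶠ s in 𝓝[>] (0 : ℝ), (v + s * A) ^ a * (v + s * B) ^ b ≤ v + s * C) :
    a * A + b * B ≤ C := by
  have h_deriv (r D : ℝ) : HasDerivAt (fun s ↦ (v + s * D) ^ r) (D * r * v ^ (r - 1)) 0 := by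
    have h_lin : HasDerivAt (fun s ↦ v + s * D) D 0 := by
      simpa using ((hasDerivAt_id' (0 : ℝ)).mul_const D).const_add v
    have h_ne : v + 0 * D ≠ 0 := by simpa using hv.ne'
    exact (h_lin.rpow_const (.inl h_ne)).congr_deriv (by rw [zero_mul, add_zero])
  have h_gap : HasDerivAt (fun s ↦ v + s * C - (v + s * A) ^ a * (v + s * B) ^ b)
      (C - (a * A + b * B)) 0 := by
    refine ((((hasDerivAt_id' (0 : ℝ)).mul_const C).const_add v).sub
      ((h_deriv a A).mul (h_deriv b B))).congr_deriv ?_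
    have h₁ : v ^ (a - 1) * v ^ b = 1 := by
      rw [← Real.rpow_add hv, show a - 1 + b = 0 by linarith, Real.rpow_zero]
    have h₂ : v ^ a * v ^ (b - 1) = 1 := by
      rw [← Real.rpow_add hv, show a + (b - 1) = 0 by linarith, Real.rpow_zero]
    simp only [zero_mul, add_zero, one_mul]
    linear_combination -(A * a) * h₁ - B * b * h₂
  have h_zero : v + 0 * C - (v + 0 * A) ^ a * (v + 0 * B) ^ b = 0 := by
    simp [← Real.rpow_add hv, hab]
  have h_slope := (hasDerivWithinAt_iff_tendsto_slope' self_notMem_Ioi).1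
    (h_gap.hasDerivWithinAt (s := Ioi 0))
  refine sub_nonneg.1 (ge_of_tendsto h_slope ?_)
  filter_upwards [h, self_mem_nhdsWithin] with s hs (hs₀ : 0 < s)
  rw [slope_def_field, h_zero, sub_zero, sub_zero]
  exact div_nonneg (sub_nonneg.2 hs) hs₀.le

theorem eventually_forall_mem_nonneg_one_add_mul {X : Type*} [TopologicalSpace X] {A : Set X}
    (hA : IsCompact A) {k : X → ℝ} (hk : ContinuousOn k A) :
    ∀ᶠ s in 𝓝 (0 : ℝ), ∀ x ∈ A, 0 ≤ 1 + s * k x := by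
  obtain ⟨B, hB⟩ := hA.exists_bound_of_continuousOn hk
  have h_lim : Tendsto (fun s : ℝ ↦ |s| * B) (𝓝 0) (𝓝 0) := by
    simpa using (Continuous.tendsto (by fun_prop) 0 : Tendsto (fun s : ℝ ↦ |s| * B) (𝓝 0) _)
  filter_upwards [h_lim.eventually_lt_const one_pos] with s hs x hx
  have h_abs : |s * k x| ≤ |s| * B := by
    rw [abs_mul]
    exact mul_le_mul_of_nonneg_left (hB x hx) (abs_nonneg s)
  linarith [neg_abs_le (s * k x)]

theorem setIntegral_one_add_mul_sq {X : Type*} [MeasurableSpace X] {μ : Measure X} {A : Set X}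
    (hA : μ A ≠ ⊤) {u : X → ℝ} (hu : IntegrableOn u A μ)
    (hu_sq : IntegrableOn (fun x ↦ u x ^ 2) A μ)
    (hu₀ : ∫ x in A, u x ∂μ = 0) (t : ℝ) :
    ∫ x in A, (1 + t * u x) ^ 2 ∂μ = μ.real A + t ^ 2 * ∫ x in A, u x ^ 2 ∂μ := by
  have h_expand (x : X) : (1 + t * u x) ^ 2 = 1 + (2 * t * u x + t ^ 2 * u x ^ 2) := by ring
  simp_rw [h_expand]
  have h_integrable : IntegrableOn (fun x ↦ 2 * t * u x + t ^ 2 * u x ^ 2) A μ :=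
    (hu.const_mul _).add (hu_sq.const_mul _)
  rw [integral_add (integrableOn_const hA).integrable h_integrable,
    integral_add (hu.const_mul _) (hu_sq.const_mul _), integral_const_mul, integral_const_mul,
    setIntegral_const, hu₀]
  simp

variable [FiniteDimensional ℝ E] [MeasurableSpace E] [BorelSpace E] {μ : Measure E}
  [μ.IsAddHaarMeasure] {K T : Set E} {f g h : E → ℝ}

theorem setIntegral_rpow_mul_setIntegral_rpow_le (ha : 0 < a) (hb : 0 < b) (hab : a + b = 1)
    (hK : IsCompact K) (hT : IsCompact T) (hf : Continuous f) (hg : Continuous g)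
    (hh : Continuous h) (hf₀ : ∀ x ∈ K, 0 ≤ f x) (hg₀ : ∀ y ∈ T, 0 ≤ g y)
    (hfgh : ∀ x ∈ K, ∀ y ∈ T, f x ^ a * g y ^ b ≤ h (a • x + b • y)) :
    (∫ x in K, f x ∂μ) ^ a * (∫ x in T, g x ∂μ) ^ b ≤ ∫ x in a • K + b • T, h x ∂μ := by
  have h_comp : IsCompact (a • K + b • T) := (hK.smul a).add (hT.smul b)
  have hh₀ : ∀ z ∈ a • K + b • T, 0 ≤ h z := by
    rintro _ ⟨_, ⟨x, hx, rfl⟩, _, ⟨y, hy, rfl⟩, rfl⟩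
    exact (mul_nonneg (Real.rpow_nonneg (hf₀ x hx) a) (Real.rpow_nonneg (hg₀ y hy) b)).trans
      (hfgh x hx y hy)
  have h_lintegral {A : Set E} {k : E → ℝ} (hA : IsCompact A) (hk : Continuous k)
      (hk₀ : ∀ x ∈ A, 0 ≤ k x) :
      ENNReal.ofReal (∫ x in A, k x ∂μ) =
        ∫⁻ x, A.indicator (fun x ↦ ENNReal.ofReal (k x)) x ∂μ := by
    rw [lintegral_indicator hA.measurableSet, ofReal_integral_eq_lintegral_ofReal
      (hk.continuousOn.integrableOn_compact hA) (ae_restrict_of_forall_mem hA.measurableSet hk₀)]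
  have h_meas {A : Set E} {k : E → ℝ} (hA : IsCompact A) (hk : Continuous k) :
      Measurable (A.indicator fun x ↦ ENNReal.ofReal (k x)) :=
    (ENNReal.measurable_ofReal.comp hk.measurable).indicator hA.measurableSet
  have h_int_f : 0 ≤ ∫ x in K, f x ∂μ := setIntegral_nonneg hK.measurableSet hf₀
  have h_int_g : 0 ≤ ∫ x in T, g x ∂μ := setIntegral_nonneg hT.measurableSet hg₀
  rw [← ENNReal.ofReal_le_ofReal_iff (setIntegral_nonneg h_comp.measurableSet hh₀),
    ENNReal.ofReal_mul (by positivity), ← ENNReal.ofReal_rpow_of_nonneg h_int_f ha.le,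
    ← ENNReal.ofReal_rpow_of_nonneg h_int_g hb.le, h_lintegral hK hf hf₀, h_lintegral hT hg hg₀,
    h_lintegral h_comp hh hh₀]
  refine prekopaLeindler_of_isAddHaarMeasure μ ha hb hab (h_meas hK hf) (h_meas hT hg)
    (h_meas h_comp hh) fun x y ↦ ?_
  by_cases hx : x ∈ K
  · by_cases hy : y ∈ T
    · rw [indicator_of_mem hx, indicator_of_mem hy,
        indicator_of_mem (Set.add_mem_add (smul_mem_smul_set hx) (smul_mem_smul_set hy)),
        ENNReal.ofReal_rpow_of_nonneg (hf₀ x hx) ha.le,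
        ENNReal.ofReal_rpow_of_nonneg (hg₀ y hy) hb.le,
        ← ENNReal.ofReal_mul (Real.rpow_nonneg (hf₀ x hx) _)]
      exact ENNReal.ofReal_le_ofReal (hfgh x hx y hy)
    · simp [hy, hb]
  · simp [hx, ha]

theorem weighted_setIntegral_add_le_of_measureReal_eq (ha : 0 < a) (hb : 0 < b) (hab : a + b = 1)
    (hK : IsCompact K) (hT : IsCompact T) (hv : 0 < v) (hKv : μ.real K = v) (hTv : μ.real T = v)
    (hKTv : μ.real (a • K + b • T) = v) (hf : Continuous f) (hg : Continuous g)
    (hh : Continuous h) (hfgh : ∀ x ∈ K, ∀ y ∈ T, a * f x + b * g y ≤ h (a • x + b • y)) :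
    a * (∫ x in K, f x ∂μ) + b * (∫ x in T, g x ∂μ) ≤ ∫ x in a • K + b • T, h x ∂μ := by
  have h_int {A : Set E} {k : E → ℝ} (hA : IsCompact A) (hAv : μ.real A = v) (hk : Continuous k)
      (s : ℝ) : ∫ x in A, (1 + s * k x) ∂μ = v + s * ∫ x in A, k x ∂μ := by
    rw [integral_add (continuous_const.continuousOn.integrableOn_compact hA)
      ((by fun_prop : Continuous fun x ↦ s * k x).continuousOn.integrableOn_compact hA),
      integral_const_mul, setIntegral_const, hAv, smul_eq_mul, mul_one]
  refine weighted_add_le_of_eventually_rpow_mul_rpow_le hab hv ?_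
  filter_upwards [self_mem_nhdsWithin, nhdsWithin_le_nhds
      (eventually_forall_mem_nonneg_one_add_mul hK hf.continuousOn), nhdsWithin_le_nhds
      (eventually_forall_mem_nonneg_one_add_mul hT hg.continuousOn)] with s (hs : 0 < s) hfs hgs
  rw [← h_int hK hKv hf, ← h_int hT hTv hg, ← h_int ((hK.smul a).add (hT.smul b)) hKTv hh]
  refine setIntegral_rpow_mul_setIntegral_rpow_le ha hb hab hK hT (by fun_prop) (by fun_prop)
    (by fun_prop) hfs hgs fun x hx y hy ↦ ?_
  calc (1 + s * f x) ^ a * (1 + s * g y) ^ b ≤ a * (1 + s * f x) + b * (1 + s * g y) :=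
        Real.geom_mean_le_arith_mean2_weighted ha.le hb.le (hfs x hx) (hgs y hy) hab
    _ = 1 + s * (a * f x + b * g y) := by linear_combination hab
    _ ≤ 1 + s * h (a • x + b • y) := by gcongr; exact hfgh x hx y hy

theorem weighted_setIntegral_sq_add_le_of_measureReal_eq (ha : 0 < a) (hb : 0 < b)
    (hab : a + b = 1) (hK : IsCompact K) (hT : IsCompact T) (hv : 0 < v) (hKv : μ.real K = v)
    (hTv : μ.real T = v) (hKTv : μ.real (a • K + b • T) = v) (u : E →L[ℝ] ℝ)
    (hKu : ∫ x in K, u x ∂μ = 0) (hTu : ∫ x in T, u x ∂μ = 0) :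
    a * (∫ x in K, u x ^ 2 ∂μ) + b * (∫ x in T, u x ^ 2 ∂μ) ≤
      ∫ x in a • K + b • T, u x ^ 2 ∂μ := by
  have h_zero_le (w : E →L[ℝ] ℝ) (hKw : ∫ x in K, w x ∂μ = 0) (hTw : ∫ x in T, w x ∂μ = 0) :
      0 ≤ ∫ x in a • K + b • T, w x ∂μ := by
    simpa [hKw, hTw] using weighted_setIntegral_add_le_of_measureReal_eq ha hb hab hK hT hv hKv
      hTv hKTv w.continuous w.continuous w.continuous fun x _ y _ ↦ by simp
  have h_add_u : ∫ x in a • K + b • T, u x ∂μ = 0 :=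
    le_antisymm (by simpa [integral_neg, hKu, hTu] using h_zero_le (-u)) (h_zero_le u hKu hTu)
  have hu := u.continuous
  have h_square {A : Set E} (hA : IsCompact A) (hAv : μ.real A = v) (hAu : ∫ x in A, u x ∂μ = 0)
      (t : ℝ) : ∫ x in A, (1 + t * u x) ^ 2 ∂μ = v + t ^ 2 * ∫ x in A, u x ^ 2 ∂μ :=
    hAv ▸ setIntegral_one_add_mul_sq hA.measure_lt_top.ne (hu.continuousOn.integrableOn_compact hA)
      ((hu.pow 2).continuousOn.integrableOn_compact hA) hAu t
  have h_sqrt : Tendsto (√·) (𝓝[>] 0) (𝓝 0) := by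
    simpa using (Real.continuous_sqrt.tendsto 0).mono_left nhdsWithin_le_nhds
  refine weighted_add_le_of_eventually_rpow_mul_rpow_le hab hv ?_
  filter_upwards [self_mem_nhdsWithin,
    h_sqrt.eventually (eventually_forall_mem_nonneg_one_add_mul hK hu.continuousOn),
    h_sqrt.eventually (eventually_forall_mem_nonneg_one_add_mul hT hu.continuousOn)]
    with s (hs : 0 < s) hKs hTs
  rw [← Real.sq_sqrt hs.le, ← h_square hK hKv hKu, ← h_square hT hTv hTu,
    ← h_square ((hK.smul a).add (hT.smul b)) hKTv h_add_u]
  refine setIntegral_rpow_mul_setIntegral_rpow_le ha hb hab hK hT (by fun_prop) (by fun_prop)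
    (by fun_prop) (fun _ _ ↦ sq_nonneg _) (fun _ _ ↦ sq_nonneg _) fun x hx y hy ↦ ?_
  have hx₀ := hKs x hx
  have hy₀ := hTs y hy
  calc ((1 + √s * u x) ^ 2) ^ a * ((1 + √s * u y) ^ 2) ^ b
      = ((1 + √s * u x) ^ a * (1 + √s * u y) ^ b) ^ 2 := by
        rw [mul_pow, Real.rpow_pow_comm hx₀, Real.rpow_pow_comm hy₀]
    _ ≤ (a * (1 + √s * u x) + b * (1 + √s * u y)) ^ 2 := by
        gcongr
        exact Real.geom_mean_le_arith_mean2_weighted ha.le hb.le hx₀ hy₀ hab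
    _ = (1 + √s * u (a • x + b • y)) ^ 2 := by
        congr 1
        simp only [map_add, map_smul, smul_eq_mul]
        linear_combination hab

-- Tilting `-u ^ 2` on `K` by a multiple `δ` of `(u - c)⁺` costs only `O(δ ^ 2)` on `a • K + b • T`:
-- complete the square in `u x - u y ≥ u x - c`.
theorem mul_setIntegral_max_sub_zero_le_of_centered (ha : 0 < a) (hb : 0 < b) (hab : a + b = 1)
    (hK : IsCompact K) (hT : IsCompact T) (hv : 0 < v) (hKv : μ.real K = v) (hTv : μ.real T = v)
    (hKTv : μ.real (a • K + b • T) = v) {u : E →L[ℝ] ℝ} (hKu : ∫ x in K, u x ∂μ = 0)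
    (hTu : ∫ x in T, u x ∂μ = 0) {c : ℝ} (huc : ∀ y ∈ T, u y ≤ c) {δ : ℝ} (hδ : 0 < δ) :
    δ * (∫ x in K, max (u x - c) 0 ∂μ) ≤ δ ^ 2 / (4 * a * b) * v := by
  have hu := u.continuous
  have h_integrable {A : Set E} (hA : IsCompact A) (k : E → ℝ) (hk : Continuous k) :
      IntegrableOn k A μ := hk.continuousOn.integrableOn_compact hA
  have h_sq := weighted_setIntegral_sq_add_le_of_measureReal_eq ha hb hab hK hT hv hKv hTv hKTv u
    hKu hTu
  have h_tilt := weighted_setIntegral_add_le_of_measureReal_eq ha hb hab hK hT hv hKv hTv hKTv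
    (f := fun x ↦ δ / a * max (u x - c) 0 - u x ^ 2) (g := fun y ↦ -u y ^ 2)
    (h := fun z ↦ δ ^ 2 / (4 * a * b) - u z ^ 2) (by fun_prop) (by fun_prop) (by fun_prop)
    fun x _ y hy ↦ ?_
  · rw [integral_sub (h_integrable hK _ (by fun_prop)) (h_integrable hK _ (by fun_prop)),
      integral_sub (integrableOn_const ((hK.smul a).add (hT.smul b)).measure_lt_top.ne).integrable
        (h_integrable ((hK.smul a).add (hT.smul b)) _ (by fun_prop)), integral_neg,
      integral_const_mul, setIntegral_const, hKTv, smul_eq_mul, mul_sub, ← mul_assoc,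
      mul_div_cancel₀ _ ha.ne'] at h_tilt
    linarith
  · have h_max : max (u x - c) 0 ≤ |u x - u y| :=
      max_le ((by linarith [huc y hy] : u x - c ≤ u x - u y).trans (le_abs_self _)) (abs_nonneg _)
    calc a * (δ / a * max (u x - c) 0 - u x ^ 2) + b * -u y ^ 2
        = δ * max (u x - c) 0 - a * u x ^ 2 - b * u y ^ 2 := by field_simp; ring
      _ ≤ δ * |u x - u y| - a * u x ^ 2 - b * u y ^ 2 := by gcongr
      _ ≤ δ ^ 2 / (4 * a * b) + a * b * |u x - u y| ^ 2 - a * u x ^ 2 - b * u y ^ 2 := by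
        gcongr
        have h_sq_nonneg : 0 ≤ (2 * a * b * |u x - u y| - δ) ^ 2 / (4 * a * b) := by positivity
        rw [← sub_nonneg]
        convert h_sq_nonneg using 1
        field_simp
        ring
      _ = δ ^ 2 / (4 * a * b) - u (a • x + b • y) ^ 2 := by
        rw [sq_abs, map_add, map_smul, map_smul, smul_eq_mul, smul_eq_mul]
        linear_combination (a * u x ^ 2 + b * u y ^ 2) * hab

theorem forall_mem_le_of_centered (ha : 0 < a) (hb : 0 < b) (hab : a + b = 1)
    (hK : IsConvexBody K) (hT : IsCompact T) (hTK : μ.real T = μ.real K)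
    (hKTK : μ.real (a • K + b • T) = μ.real K) {u : E →L[ℝ] ℝ} (hKu : ∫ x in K, u x ∂μ = 0)
    (hTu : ∫ x in T, u x ∂μ = 0) {c : ℝ} (huc : ∀ y ∈ T, u y ≤ c) : ∀ x ∈ K, u x ≤ c := by
  set I := ∫ x in K, max (u x - c) 0 ∂μ
  have hv : 0 < μ.real K := hK.measureReal_pos
  have h_integrable : IntegrableOn (fun x ↦ max (u x - c) 0) K μ :=
    (by fun_prop : Continuous _).continuousOn.integrableOn_compact hK.isCompact
  have hI_nonneg : 0 ≤ I := setIntegral_nonneg hK.isCompact.measurableSet fun x _ ↦ le_max_right _ _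
  have hI_zero : I = 0 := by
    refine le_antisymm (not_lt.1 fun hI_pos ↦ ?_) hI_nonneg
    have h_le := mul_setIntegral_max_sub_zero_le_of_centered ha hb hab hK.isCompact hT hv rfl hTK
      hKTK hKu hTu huc (δ := 2 * a * b * I / μ.real K) (by positivity)
    have h_eq : (2 * a * b * I / μ.real K) ^ 2 / (4 * a * b) * μ.real K =
        2 * a * b * I / μ.real K * I / 2 := by
      field_simp
      ring
    have h_pos : 0 < 2 * a * b * I / μ.real K * I := by positivity
    linarith
  have h_ae := (setIntegral_eq_zero_iff_of_nonneg_ae (ae_of_all _ fun x ↦ le_max_right _ _)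
    h_integrable).1 hI_zero
  refine hK.subset_of_measure_sdiff_eq_zero (μ := μ) (A := {x | u x ≤ c})
    (isClosed_le u.continuous continuous_const) ?_
  rw [EventuallyEq, ae_restrict_iff' hK.isCompact.measurableSet] at h_ae
  rw [measure_eq_zero_iff_ae_notMem]
  filter_upwards [h_ae] with x hx hxK
  exact hxK.2 (by simpa using hx hxK.1)

theorem subset_of_centered (ha : 0 < a) (hb : 0 < b) (hab : a + b = 1) (hK : IsConvexBody K)
    (hT : IsCompact T) (hT_conv : Convex ℝ T) (hTK : μ.real T = μ.real K)
    (hKTK : μ.real (a • K + b • T) = μ.real K) (hK₀ : ∫ x in K, x ∂μ = 0)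
    (hT₀ : ∫ x in T, x ∂μ = 0) : K ⊆ T := by
  have h_centered {A : Set E} (hA : IsCompact A) (hA₀ : ∫ x in A, x ∂μ = 0) (u : E →L[ℝ] ℝ) :
      ∫ x in A, u x ∂μ = 0 := by
    have h_integrable : IntegrableOn (fun x : E ↦ x) A μ :=
      continuous_id.continuousOn.integrableOn_compact hA
    rw [u.integral_comp_comm h_integrable, hA₀, map_zero]
  intro x hx
  by_contra hxT
  obtain ⟨u, c, huc, hcx⟩ := geometric_hahn_banach_closed_point hT_conv hT.isClosed hxT
  exact hcx.not_ge (forall_mem_le_of_centered ha hb hab hK hT hTK hKTK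
    (h_centered hK.isCompact hK₀ u) (h_centered hT hT₀ u) (fun y hy ↦ (huc y hy).le) x hx)

theorem exists_setIntegral_vadd_eq_zero {A : Set E} (hA : IsCompact A) (hA₀ : μ.real A ≠ 0) :
    ∃ c : E, ∫ x in c +ᵥ A, x ∂μ = 0 := by
  have h_integrable : IntegrableOn (fun x : E ↦ x) A μ :=
    continuous_id.continuousOn.integrableOn_compact hA
  refine ⟨-(⨍ x in A, x ∂μ), ?_⟩
  have h_translate (c : E) : ∫ x in c +ᵥ A, x ∂μ = ∫ x in A, (c + x) ∂μ := by
    simpa [← Set.image_vadd] using (measurePreserving_add_left μ c).setIntegral_image_emb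
      (measurableEmbedding_addLeft c) id A
  rw [h_translate, integral_add (integrableOn_const hA.measure_lt_top.ne).integrable h_integrable,
    setIntegral_const, setAverage_eq, smul_neg, smul_inv_smul₀ hA₀]
  simp

theorem exists_eq_vadd_of_measureReal_add_eq (ha : 0 < a) (hb : 0 < b) (hab : a + b = 1)
    (hK : IsConvexBody K) (hT : IsConvexBody T) (hTK : μ.real T = μ.real K)
    (hKTK : μ.real (a • K + b • T) = μ.real K) : ∃ z : E, T = z +ᵥ K := by
  have h_vadd (x : E) (A : Set E) : μ.real (x +ᵥ A) = μ.real A := by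
    simp only [measureReal_def, measure_vadd]
  obtain ⟨c, hc⟩ := exists_setIntegral_vadd_eq_zero hK.isCompact (hK.measureReal_pos (μ := μ)).ne'
  obtain ⟨d, hd⟩ := exists_setIntegral_vadd_eq_zero hT.isCompact (hT.measureReal_pos (μ := μ)).ne'
  have h_add : a • (c +ᵥ K) + b • (d +ᵥ T) = (a • c + b • d) +ᵥ (a • K + b • T) := by
    simp only [← Set.singleton_vadd, vadd_eq_add, smul_add, smul_set_singleton,
      ← singleton_add_singleton]
    abel
  have h_subset : c +ᵥ K ⊆ d +ᵥ T :=
    subset_of_centered ha hb hab (hK.vadd c) (hT.vadd d).isCompact (hT.vadd d).convex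
      (by simpa only [h_vadd] using hTK) (by simpa only [h_add, h_vadd] using hKTK) hc hd
  have h_eq : c +ᵥ K = d +ᵥ T :=
    (hT.vadd d).eq_of_subset_of_measureReal_le (μ := μ) (hK.vadd c).isCompact h_subset
      (by simpa only [h_vadd] using hTK.le)
  exact ⟨-d + c, by rw [add_vadd, h_eq, neg_vadd_vadd]⟩

end PrekopaLeindlerEquality

section Homothety

variable {E : Type*} [AddCommGroup E] [Module ℝ E] {A B C : Set E}

/-- A set which is centrally symmetric about some point, not necessarily the origin; equivalently,
its reflection in the origin is one of its translates. -/
def IsCentrallySymmetric (C : Set E) : Prop :=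
  ∃ z : E, -C = z +ᵥ C

/-- `B` is positively homothetic to `A`, i.e. a translate of a positive dilate of `A`. -/
def IsHomothetic (A B : Set E) : Prop :=
  ∃ (z : E) (r : ℝ), 0 < r ∧ B = z +ᵥ r • A

theorem smul_set_vadd_set (r : ℝ) (z : E) (A : Set E) : r • (z +ᵥ A) = r • z +ᵥ r • A := by
  simp only [← singleton_vadd, vadd_eq_add, smul_add, smul_set_singleton]

theorem neg_vadd_set {G : Type*} [AddCommGroup G] (z : G) (A : Set G) : -(z +ᵥ A) = -z +ᵥ -A := by
  simp only [← singleton_vadd, vadd_eq_add, neg_add, neg_singleton]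

theorem inv_add_smul_add {α β : ℝ} (hα : 0 < α) (hβ : 0 < β) :
    (α + β)⁻¹ • (A + B) = (α / (α + β)) • α⁻¹ • A + (β / (α + β)) • β⁻¹ • B := by
  rw [smul_smul, smul_smul, smul_add]
  congr 2 <;> field_simp

namespace IsHomothetic

@[refl]
theorem refl (A : Set E) : IsHomothetic A A :=
  ⟨0, 1, one_pos, by rw [one_smul, zero_vadd]⟩

theorem vadd_right (A : Set E) (z : E) : IsHomothetic A (z +ᵥ A) :=
  ⟨z, 1, one_pos, by rw [one_smul]⟩

theorem smul_right (A : Set E) {r : ℝ} (hr : 0 < r) : IsHomothetic A (r • A) :=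
  ⟨0, r, hr, by rw [zero_vadd]⟩

theorem symm (h : IsHomothetic A B) : IsHomothetic B A := by
  obtain ⟨z, r, hr, rfl⟩ := h
  refine ⟨-(r⁻¹ • z), r⁻¹, inv_pos.2 hr, ?_⟩
  rw [smul_set_vadd_set, inv_smul_smul₀ hr.ne', neg_vadd_vadd]

theorem trans (h : IsHomothetic A B) (h' : IsHomothetic B C) : IsHomothetic A C := by
  obtain ⟨z, r, hr, rfl⟩ := h
  obtain ⟨w, s, hs, rfl⟩ := h'
  exact ⟨w + s • z, s * r, mul_pos hs hr, by rw [smul_set_vadd_set, vadd_vadd, smul_smul]⟩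

theorem neg (h : IsHomothetic A B) : IsHomothetic (-A) (-B) := by
  obtain ⟨z, r, hr, rfl⟩ := h
  exact ⟨-z, r, hr, by rw [neg_vadd_set, Set.smul_set_neg]⟩

theorem add_right (hA : Convex ℝ A) (h : IsHomothetic A B) : IsHomothetic A (B + A) := by
  obtain ⟨z, r, hr, rfl⟩ := h
  refine ⟨z, r + 1, by positivity, ?_⟩
  rw [vadd_add_assoc, hA.add_smul hr.le zero_le_one, one_smul]

theorem isCentrallySymmetric (h : IsHomothetic A B) (hA : IsCentrallySymmetric A) :
    IsCentrallySymmetric B := by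
  obtain ⟨z, r, -, rfl⟩ := h
  obtain ⟨w, hw⟩ := hA
  refine ⟨-z + r • w - z, ?_⟩
  rw [neg_vadd_set, ← Set.smul_set_neg, hw, smul_set_vadd_set, vadd_vadd, vadd_vadd, sub_add_cancel]

end IsHomothetic

theorem IsCentrallySymmetric.isHomothetic_neg (hA : IsCentrallySymmetric A) :
    IsHomothetic A (-A) := by
  obtain ⟨z, hz⟩ := hA
  exact hz ▸ .vadd_right A z

end Homothety

section MeasureRoot

variable {E : Type*} [NormedAddCommGroup E] [NormedSpace ℝ E] [MeasurableSpace E]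
  {μ : Measure E} {A B : Set E}

/-- The `n`-th root of the measure of `A`, where `n` is the dimension of the ambient space: the
size functional that the Brunn–Minkowski inequality asserts to be superadditive. -/
noncomputable def measureRoot (μ : Measure E) (A : Set E) : ℝ :=
  μ.real A ^ (finrank ℝ E : ℝ)⁻¹

theorem measureRoot_nonneg : 0 ≤ measureRoot μ A :=
  Real.rpow_nonneg measureReal_nonneg _

theorem measureRoot_mono (h : A ⊆ B) (hB : μ B ≠ ⊤) : measureRoot μ A ≤ measureRoot μ B :=
  Real.rpow_le_rpow measureReal_nonneg (measureReal_mono h hB) (by positivity)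

theorem IsConvexBody.measureRoot_pos [μ.IsOpenPosMeasure] [IsFiniteMeasureOnCompacts μ]
    (hA : IsConvexBody A) : 0 < measureRoot μ A :=
  Real.rpow_pos_of_pos hA.measureReal_pos _

theorem measureRoot_pow [FiniteDimensional ℝ E] [Nontrivial E] :
    measureRoot μ A ^ finrank ℝ E = μ.real A :=
  Real.rpow_inv_natCast_pow measureReal_nonneg finrank_pos.ne'

theorem measureRoot_empty [FiniteDimensional ℝ E] [Nontrivial E] :
    measureRoot μ (∅ : Set E) = 0 := by
  simp [measureRoot, finrank_pos.ne']

variable [FiniteDimensional ℝ E] [BorelSpace E] [μ.IsAddHaarMeasure]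

theorem measureRoot_vadd (z : E) : measureRoot μ (z +ᵥ A) = measureRoot μ A := by
  simp only [measureRoot, measureReal_def, measure_vadd]

theorem measureRoot_neg : measureRoot μ (-A) = measureRoot μ A := by
  simp only [measureRoot, measureReal_def, Measure.measure_neg]

theorem measureRoot_smul [Nontrivial E] {r : ℝ} (hr : 0 ≤ r) :
    measureRoot μ (r • A) = r * measureRoot μ A := by
  rw [measureRoot, measureReal_def, Measure.addHaar_smul, ENNReal.toReal_mul,
    ENNReal.toReal_ofReal (abs_nonneg _), abs_of_nonneg (pow_nonneg hr _),
    Real.mul_rpow (pow_nonneg hr _) ENNReal.toReal_nonneg,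
    Real.pow_rpow_inv_natCast hr finrank_pos.ne', measureRoot, measureReal_def]

theorem measureReal_inv_measureRoot_smul [Nontrivial E] (hA : 0 < measureRoot μ A) :
    μ.real ((measureRoot μ A)⁻¹ • A) = 1 := by
  rw [← measureRoot_pow, measureRoot_smul (inv_nonneg.2 hA.le), inv_mul_cancel₀ hA.ne', one_pow]

theorem IsHomothetic.exists_eq_vadd_of_measureRoot_eq [Nontrivial E] (h : IsHomothetic A B)
    (hA : 0 < measureRoot μ A) (hAB : measureRoot μ A = measureRoot μ B) :
    ∃ z : E, B = z +ᵥ A := by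
  obtain ⟨z, r, hr, rfl⟩ := h
  rw [measureRoot_vadd, measureRoot_smul hr.le, eq_comm, mul_eq_right₀ hA.ne'] at hAB
  exact ⟨z, by rw [hAB, one_smul]⟩

end MeasureRoot

section BrunnMinkowski

variable {E : Type*} [NormedAddCommGroup E] [NormedSpace ℝ E] [FiniteDimensional ℝ E]
  [MeasurableSpace E] [BorelSpace E] {μ : Measure E} [μ.IsAddHaarMeasure] {A B : Set E}

theorem measureReal_rpow_mul_measureReal_rpow_le {a b : ℝ} (ha : 0 < a) (hb : 0 < b)
    (hab : a + b = 1) (hA : IsCompact A) (hB : IsCompact B) :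
    μ.real A ^ a * μ.real B ^ b ≤ μ.real (a • A + b • B) := by
  simpa using setIntegral_rpow_mul_setIntegral_rpow_le (μ := μ) (f := 1) (g := 1) (h := 1)
    ha hb hab hA hB continuous_one continuous_one continuous_one (by simp) (by simp) (by simp)

theorem measureRoot_le_measureRoot_add (hA : A.Nonempty) (hAB : μ (A + B) ≠ ⊤) :
    measureRoot μ B ≤ measureRoot μ (A + B) := by
  obtain ⟨z, hz⟩ := hA
  rw [← measureRoot_vadd z]
  exact measureRoot_mono (vadd_set_subset_vadd hz) hAB

variable [Nontrivial E]

theorem measureRoot_add_le_of_pos (hA : IsCompact A) (hB : IsCompact B)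
    (hA₀ : 0 < measureRoot μ A) (hB₀ : 0 < measureRoot μ B) :
    measureRoot μ A + measureRoot μ B ≤ measureRoot μ (A + B) := by
  set α := measureRoot μ A with hα
  set β := measureRoot μ B with hβ
  have h_sum : 0 < α + β := add_pos hA₀ hB₀
  have h_le := measureReal_rpow_mul_measureReal_rpow_le (μ := μ) (div_pos hA₀ h_sum)
    (div_pos hB₀ h_sum) (by field_simp) (hA.smul α⁻¹) (hB.smul β⁻¹)
  rw [← inv_add_smul_add hA₀ hB₀, hα, measureReal_inv_measureRoot_smul hA₀,
    hβ, measureReal_inv_measureRoot_smul hB₀, Real.one_rpow, Real.one_rpow, one_mul,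
    ← measureRoot_pow, measureRoot_smul (inv_nonneg.2 h_sum.le)] at h_le
  rwa [one_le_pow_iff_of_nonneg (mul_nonneg (inv_nonneg.2 h_sum.le) measureRoot_nonneg)
    finrank_pos.ne', le_inv_mul_iff₀ h_sum, mul_one] at h_le

theorem measureRoot_add_le (hA : IsCompact A) (hB : IsCompact B) (hA₀ : A.Nonempty)
    (hB₀ : B.Nonempty) : measureRoot μ A + measureRoot μ B ≤ measureRoot μ (A + B) := by
  have hAB : μ (A + B) ≠ ⊤ := (hA.add hB).measure_lt_top.ne
  rcases (measureRoot_nonneg (μ := μ) (A := A)).eq_or_lt with hA_zero | hA_pos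
  · rw [← hA_zero, zero_add]
    exact measureRoot_le_measureRoot_add hA₀ hAB
  rcases (measureRoot_nonneg (μ := μ) (A := B)).eq_or_lt with hB_zero | hB_pos
  · rw [← hB_zero, add_zero, add_comm A]
    exact measureRoot_le_measureRoot_add hB₀ (add_comm A B ▸ hAB)
  exact measureRoot_add_le_of_pos hA hB hA_pos hB_pos

theorem measureRoot_add_of_isHomothetic (hA : Convex ℝ A) (h : IsHomothetic A B) :
    measureRoot μ (A + B) = measureRoot μ A + measureRoot μ B := by
  obtain ⟨z, r, hr, rfl⟩ := h
  rw [add_comm A, vadd_add_assoc, measureRoot_vadd, measureRoot_vadd]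
  nth_rw 2 [← one_smul ℝ A]
  rw [← hA.add_smul hr.le zero_le_one, measureRoot_smul (by positivity), measureRoot_smul hr.le]
  ring

theorem IsConvexBody.measureRoot_add_eq_iff (hA : IsConvexBody A) (hB : IsConvexBody B) :
    measureRoot μ (A + B) = measureRoot μ A + measureRoot μ B ↔ IsHomothetic A B := by
  refine ⟨fun h ↦ ?_, measureRoot_add_of_isHomothetic hA.convex⟩
  have hα : 0 < measureRoot μ A := hA.measureRoot_pos
  have hβ : 0 < measureRoot μ B := hB.measureRoot_pos
  set α := measureRoot μ A
  set β := measureRoot μ B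
  have h_sum : 0 < α + β := add_pos hα hβ
  have hA_one : μ.real (α⁻¹ • A) = 1 := measureReal_inv_measureRoot_smul hα
  have hB_one : μ.real (β⁻¹ • B) = 1 := measureReal_inv_measureRoot_smul hβ
  obtain ⟨z, hz⟩ := exists_eq_vadd_of_measureReal_add_eq (μ := μ) (div_pos hα h_sum)
    (div_pos hβ h_sum) (by field_simp) (hA.smul (inv_ne_zero hα.ne'))
    (hB.smul (inv_ne_zero hβ.ne')) (hB_one.trans hA_one.symm) (by
      rw [← inv_add_smul_add hα hβ, hA_one, ← h]
      exact measureReal_inv_measureRoot_smul (h ▸ h_sum))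
  have h_unit : IsHomothetic (α⁻¹ • A) (β⁻¹ • B) := hz ▸ .vadd_right _ z
  exact ((IsHomothetic.smul_right A (inv_pos.2 hα)).trans h_unit).trans
    (IsHomothetic.smul_right B (inv_pos.2 hβ)).symm

end BrunnMinkowski

section Frontier

variable {E : Type*} [NormedAddCommGroup E] [NormedSpace ℝ E] {P R : Set E}

theorem IsConvexBody.isConnected_frontier (hP : IsConvexBody P) (hE : 1 < Module.rank ℝ E) :
    IsConnected (frontier P) := by
  obtain ⟨e, -, -, he⟩ := exists_homeomorph_image_interior_closure_frontier_eq_unitBall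
    hP.convex hP.interior_nonempty hP.isCompact.isBounded
  rw [← e.isConnected_image, he]
  exact isConnected_sphere hE 0 zero_le_one

theorem subset_of_frontier_subset_of_isOpen {U : Set E} (hP : IsCompact P) (hU : IsOpen U)
    (hU_conv : Convex ℝ U) (hU₀ : U.Nonempty) (h : frontier P ⊆ U) : P ⊆ U := by
  intro y hy
  by_contra hyU
  obtain ⟨l, hl⟩ := geometric_hahn_banach_open_point hU_conv hU hyU
  obtain ⟨x, hx, hx_max⟩ := hP.exists_isMaxOn ⟨y, hy⟩ l.continuous.continuousOn
  have hx_int : x ∈ interior P := by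
    by_contra hx_int
    exact (hl x (h ⟨subset_closure hx, hx_int⟩)).not_ge (hx_max hy)
  have hl_max : IsLocalMax l x := hx_max.isLocalMax (mem_interior_iff_mem_nhds.1 hx_int)
  have hl₀ : l = 0 := by simpa using hl_max.fderiv_eq_zero
  obtain ⟨z, hz⟩ := hU₀
  simpa [hl₀] using hl z hz

theorem subset_interior_or_disjoint_of_disjoint_frontier {X : Type*} [TopologicalSpace X]
    {S R : Set X} (hS : IsPreconnected S) (hR : IsClosed R) (h : Disjoint S (frontier R)) :
    S ⊆ interior R ∨ Disjoint S R := by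
  rw [disjoint_left, hR.frontier_eq] at h
  refine (hS.subset_or_subset isOpen_interior hR.isOpen_compl
    (disjoint_compl_right.mono_left interior_subset) fun x hx ↦ ?_).imp_right
    disjoint_left.2
  exact or_iff_not_imp_right.2 fun hxR ↦ not_not.1 fun hx_int ↦ h hx ⟨not_not.1 hxR, hx_int⟩

theorem IsConvexBody.frontier_inter_frontier_nonempty (hP : IsConvexBody P) (hR : IsConvexBody R)
    (hE : 1 < Module.rank ℝ E) (hPR : (P ∩ R).Nonempty) (hRP : ¬R ⊆ interior P)
    (hPR_int : ¬P ⊆ interior R) : (frontier P ∩ frontier R).Nonempty := by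
  rw [← not_disjoint_iff_nonempty_inter] at hPR ⊢
  intro hd
  have h_dichotomy {A B : Set E} (hA : IsConvexBody A) (hB : IsConvexBody B)
      (hAB : ¬A ⊆ interior B) (hd : Disjoint (frontier A) (frontier B)) :
      Disjoint (frontier A) B :=
    (subset_interior_or_disjoint_of_disjoint_frontier (hA.isConnected_frontier hE).isPreconnected
      hB.isCompact.isClosed hd).resolve_left fun h ↦ hAB
        (subset_of_frontier_subset_of_isOpen hA.isCompact isOpen_interior hB.convex.interior
          hB.interior_nonempty h)
  exact (subset_interior_or_disjoint_of_disjoint_frontier hP.convex.isPreconnected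
    hR.isCompact.isClosed (h_dichotomy hR hP hRP hd.symm).symm).elim hPR_int hPR

theorem IsConvexBody.not_subset_interior_of_subset (hP : IsConvexBody P)
    (hE : 1 < Module.rank ℝ E) (hPR : P ⊆ R) : ¬R ⊆ interior P := fun h ↦ by
  obtain ⟨x, hx⟩ := (hP.isConnected_frontier hE).nonempty
  exact hx.2 (h (hPR (hP.isCompact.isClosed.frontier_subset hx)))

end Frontier

section MinkowskiDifference

variable {E : Type*} [AddCommGroup E] {P Q : Set E}

/-- The Minkowski difference (erosion) of `P` by `Q`: the set of translation vectors which carry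
`Q` into `P`. -/
def minkowskiDiff (P Q : Set E) : Set E :=
  {x | x +ᵥ Q ⊆ P}

theorem minkowskiDiff_eq_compl_sub : minkowskiDiff P Q = (Pᶜ - Q)ᶜ := by
  ext x
  simp only [minkowskiDiff, mem_ofPred_eq, mem_compl_iff, Set.mem_sub, not_exists, not_and]
  refine ⟨fun h y hy q hq hx ↦ hy (h ⟨q, hq, by simp [← hx]⟩), fun h ↦ ?_⟩
  rintro _ ⟨q, hq, rfl⟩
  by_contra hxq
  exact h _ hxq q hq (add_sub_cancel_right x q)

theorem minkowskiDiff_mono_left {P' : Set E} (h : P ⊆ P') :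
    minkowskiDiff P Q ⊆ minkowskiDiff P' Q :=
  fun _ hx ↦ hx.trans h

theorem minkowskiDiff_add_subset : minkowskiDiff P Q + Q ⊆ P := by
  rintro _ ⟨x, hx, q, hq, rfl⟩
  exact hx (vadd_mem_vadd_set hq)

theorem mem_add_iff_inter_vadd_neg_nonempty {x : E} :
    x ∈ P + Q ↔ (P ∩ (x +ᵥ -Q)).Nonempty := by
  constructor
  · rintro ⟨p, hp, q, hq, rfl⟩
    exact ⟨p, hp, -q, by simpa using hq, by simp⟩
  · rintro ⟨_, hp, q, hq, rfl⟩
    exact ⟨_, hp, -q, hq, by simp⟩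

theorem minkowskiDiff_neg_subset_add (hQ : Q.Nonempty) : minkowskiDiff P (-Q) ⊆ P + Q := by
  intro x hx
  rw [mem_add_iff_inter_vadd_neg_nonempty, inter_eq_right.2 hx]
  exact hQ.neg.vadd_set

theorem mem_minkowskiDiff_neg_iff {x : E} : x ∈ minkowskiDiff P (-Q) ↔ Q ⊆ x +ᵥ -P := by
  rw [minkowskiDiff, mem_ofPred_eq, ← neg_subset_neg, neg_vadd_set, neg_neg,
    ← vadd_set_subset_vadd_set_iff (a := x), vadd_neg_vadd]

theorem convex_minkowskiDiff [Module ℝ E] (hP : Convex ℝ P) : Convex ℝ (minkowskiDiff P Q) := by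
  rintro x hx y hy s t hs ht hst _ ⟨q, hq, rfl⟩
  convert hP (hx (vadd_mem_vadd_set hq)) (hy (vadd_mem_vadd_set hq)) hs ht hst using 1
  simp only [vadd_eq_add, smul_add]
  rw [add_add_add_comm, ← add_smul, hst, one_smul]

variable [TopologicalSpace E] [IsTopologicalAddGroup E]

theorem isOpen_minkowskiDiff (hP : IsOpen P) (hQ : IsCompact Q) : IsOpen (minkowskiDiff P Q) := by
  rw [minkowskiDiff_eq_compl_sub, sub_eq_add_neg]
  exact (hP.isClosed_compl.add_right_of_isCompact hQ.neg).isOpen_compl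

theorem isCompact_minkowskiDiff (hP : IsCompact P) (hP_closed : IsClosed P) (hQ : Q.Nonempty) :
    IsCompact (minkowskiDiff P Q) := by
  obtain ⟨q, hq⟩ := hQ
  refine (hP.vadd (-q)).of_isClosed_subset ?_ fun x hx ↦ ?_
  · rw [minkowskiDiff_eq_compl_sub]
    exact hP_closed.isOpen_compl.sub_right.isClosed_compl
  · exact ⟨x + q, hx (vadd_mem_vadd_set hq), by simp⟩

end MinkowskiDifference

section FrontierSum

variable {E : Type*} [NormedAddCommGroup E] {P Q : Set E}

theorem image_subLeft_eq_vadd_neg (x : E) (A : Set E) :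
    Homeomorph.subLeft x '' A = x +ᵥ -A := by
  rw [← image_neg_eq_neg, ← image_vadd, image_image]
  simp only [Homeomorph.subLeft_apply, sub_eq_add_neg, vadd_eq_add]

theorem interior_vadd_neg (x : E) (A : Set E) : interior (x +ᵥ -A) = x +ᵥ -interior A := by
  simp only [← image_subLeft_eq_vadd_neg, Homeomorph.image_interior]

theorem frontier_vadd_neg (x : E) (A : Set E) : frontier (x +ᵥ -A) = x +ᵥ -frontier A := by
  simp only [← image_subLeft_eq_vadd_neg, Homeomorph.image_frontier]

theorem frontier_add_frontier_subset (hP : IsClosed P) (hQ : IsClosed Q) :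
    frontier P + frontier Q ⊆
      (P + Q) \ (minkowskiDiff (interior P) (-Q) ∪ minkowskiDiff (interior Q) (-P)) := by
  have h_disjoint {A B : Set E} (hB : IsClosed B) {x y : E} (hx : x ∈ frontier A)
      (hy : y ∈ frontier B) : x + y ∉ minkowskiDiff (interior A) (-B) := fun h ↦
    hx.2 (by simpa using h (vadd_mem_vadd_set (neg_mem_neg.2 (hB.frontier_subset hy))))
  rintro _ ⟨x, hx, y, hy, rfl⟩
  refine ⟨Set.add_mem_add (hP.frontier_subset hx) (hQ.frontier_subset hy),
    not_or.2 ⟨h_disjoint hQ hx hy, ?_⟩⟩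
  simpa only [add_comm x y] using h_disjoint hP hy hx

variable [NormedSpace ℝ E]

theorem IsConvexBody.frontier_add_frontier_eq (hP : IsConvexBody P) (hQ : IsConvexBody Q)
    (hE : 1 < Module.rank ℝ E) : frontier P + frontier Q =
      (P + Q) \ (minkowskiDiff (interior P) (-Q) ∪ minkowskiDiff (interior Q) (-P)) := by
  refine (frontier_add_frontier_subset hP.isCompact.isClosed hQ.isCompact.isClosed).antisymm ?_
  rintro x ⟨hx, hx_diff⟩
  rw [mem_union, not_or, mem_minkowskiDiff_neg_iff (P := interior Q), ← interior_vadd_neg]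
    at hx_diff
  rw [mem_add_iff_inter_vadd_neg_nonempty] at hx ⊢
  rw [← frontier_vadd_neg]
  exact hP.frontier_inter_frontier_nonempty (hQ.neg.vadd x) hE hx hx_diff.1 hx_diff.2

theorem IsConvexBody.disjoint_minkowskiDiff (hP : IsConvexBody P) (hE : 1 < Module.rank ℝ E) :
    Disjoint (minkowskiDiff (interior P) (-Q)) (minkowskiDiff (interior Q) (-P)) := by
  refine disjoint_left.2 fun x hxP hxQ ↦ hP.not_subset_interior_of_subset hE ?_ hxP
  rw [mem_minkowskiDiff_neg_iff] at hxQ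
  exact hxQ.trans (vadd_set_mono (neg_subset_neg.2 interior_subset))

theorem IsConvexBody.measureReal_frontier_add_frontier [MeasurableSpace E] [BorelSpace E]
    {μ : Measure E} [IsFiniteMeasureOnCompacts μ] (hP : IsConvexBody P) (hQ : IsConvexBody Q)
    (hE : 1 < Module.rank ℝ E) : μ.real (frontier P + frontier Q) = μ.real (P + Q) -
      (μ.real (minkowskiDiff (interior P) (-Q)) + μ.real (minkowskiDiff (interior Q) (-P))) := by
  have h_subset {A B : Set E} (hB : IsConvexBody B) : minkowskiDiff (interior A) (-B) ⊆ A + B :=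
    (minkowskiDiff_neg_subset_add hB.nonempty).trans (add_subset_add_right interior_subset)
  have h_measurable {A B : Set E} (hB : IsConvexBody B) :
      MeasurableSet (minkowskiDiff (interior A) (-B)) :=
    (isOpen_minkowskiDiff isOpen_interior hB.isCompact.neg).measurableSet
  have h_top : μ (P + Q) ≠ ⊤ := (hP.isCompact.add hQ.isCompact).measure_lt_top.ne
  have hPQ : minkowskiDiff (interior P) (-Q) ⊆ P + Q := h_subset hQ
  have hQP : minkowskiDiff (interior Q) (-P) ⊆ P + Q := add_comm Q P ▸ h_subset hP
  rw [hP.frontier_add_frontier_eq hQ hE, measureReal_sdiff (union_subset hPQ hQP)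
      ((h_measurable hQ).union (h_measurable hP)) h_top,
    measureReal_union (hP.disjoint_minkowskiDiff hE) (h_measurable hP)
      (measure_ne_top_of_subset hPQ h_top) (measure_ne_top_of_subset hQP h_top)]

end FrontierSum

section MinkowskiDifferenceVolume

variable {E : Type*} [NormedAddCommGroup E] [NormedSpace ℝ E] {P Q : Set E}

theorem vadd_smul_interior_subset_minkowskiDiff (hQ : Convex ℝ Q) (z : E) {s : ℝ} (hs : 1 < s) :
    z +ᵥ (s - 1) • interior Q ⊆ minkowskiDiff (interior (z +ᵥ s • Q)) Q := by
  have hs' : 0 < s - 1 := sub_pos.2 hs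
  have h_add : (z +ᵥ (s - 1) • interior Q) + Q ⊆ interior (z +ᵥ s • Q) :=
    calc (z +ᵥ (s - 1) • interior Q) + Q = z +ᵥ (interior ((s - 1) • Q) + Q) := by
          rw [vadd_add_assoc, interior_smul₀ hs'.ne']
      _ ⊆ z +ᵥ interior ((s - 1) • Q + Q) := vadd_set_mono subset_interior_add_left
      _ = interior (z +ᵥ s • Q) := by
          nth_rw 2 [← one_smul ℝ Q]
          rw [← hQ.add_smul hs'.le zero_le_one, sub_add_cancel, interior_vadd]
  exact fun x hx ↦ (vadd_set_subset_vadd hx).trans h_add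

variable [MeasurableSpace E] {μ : Measure E} [μ.IsAddHaarMeasure]

theorem measureRoot_minkowskiDiff_interior_le_minkowskiDiff (hP : IsCompact P)
    (hQ : Q.Nonempty) :
    measureRoot μ (minkowskiDiff (interior P) Q) ≤ measureRoot μ (minkowskiDiff P Q) :=
  measureRoot_mono (minkowskiDiff_mono_left interior_subset)
    (isCompact_minkowskiDiff hP hP.isClosed hQ).measure_lt_top.ne

variable [FiniteDimensional ℝ E] [BorelSpace E]

theorem IsConvexBody.measureRoot_interior (hP : IsConvexBody P) :
    measureRoot μ (interior P) = measureRoot μ P := by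
  rw [measureRoot, measureReal_def,
    measure_interior_of_null_frontier (hP.convex.addHaar_frontier μ), measureRoot, measureReal_def]

variable [Nontrivial E]

theorem measureRoot_minkowskiDiff_add_le (hP : IsCompact P) (hQ : IsCompact Q) (hQ₀ : Q.Nonempty)
    (h : (minkowskiDiff P Q).Nonempty) :
    measureRoot μ (minkowskiDiff P Q) + measureRoot μ Q ≤ measureRoot μ P :=
  (measureRoot_add_le (isCompact_minkowskiDiff hP hP.isClosed hQ₀) hQ h hQ₀).trans
    (measureRoot_mono minkowskiDiff_add_subset hP.measure_lt_top.ne)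

theorem measureRoot_minkowskiDiff_interior_le (hP : IsCompact P) (hQ : IsCompact Q)
    (hQ₀ : Q.Nonempty) : measureRoot μ (minkowskiDiff (interior P) Q) ≤
      max (measureRoot μ P - measureRoot μ Q) 0 := by
  rcases (minkowskiDiff (interior P) Q).eq_empty_or_nonempty with h_empty | h_nonempty
  · rw [h_empty, measureRoot_empty]
    exact le_max_right _ _
  · refine le_max_of_le_left ((measureRoot_minkowskiDiff_interior_le_minkowskiDiff hP hQ₀).trans ?_)
    exact le_sub_iff_add_le.2 (measureRoot_minkowskiDiff_add_le hP hQ hQ₀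
      (h_nonempty.mono (minkowskiDiff_mono_left interior_subset)))

theorem IsConvexBody.isHomothetic_of_measureRoot_minkowskiDiff_interior (hP : IsConvexBody P)
    (hQ : IsConvexBody Q) (hQP : measureRoot μ Q < measureRoot μ P)
    (h : measureRoot μ (minkowskiDiff (interior P) Q) = measureRoot μ P - measureRoot μ Q) :
    IsHomothetic Q P := by
  have h_nonempty : (minkowskiDiff (interior P) Q).Nonempty := by
    rw [nonempty_iff_ne_empty]
    rintro h_empty
    rw [h_empty, measureRoot_empty] at h
    linarith
  have hD : IsConvexBody (minkowskiDiff P Q) :=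
    { isCompact := isCompact_minkowskiDiff hP.isCompact hP.isCompact.isClosed hQ.nonempty
      convex := convex_minkowskiDiff hP.convex
      interior_nonempty := h_nonempty.mono <| interior_maximal
        (minkowskiDiff_mono_left interior_subset)
        (isOpen_minkowskiDiff isOpen_interior hQ.isCompact) }
  have h_le_sub := h.symm.trans_le
    (measureRoot_minkowskiDiff_interior_le_minkowskiDiff (μ := μ) hP.isCompact hQ.nonempty)
  have h_le_add := measureRoot_add_le (μ := μ) hD.isCompact hQ.isCompact hD.nonempty hQ.nonempty
  have h_add_le := measureRoot_mono (μ := μ) (minkowskiDiff_add_subset (P := P) (Q := Q))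
    hP.isCompact.measure_lt_top.ne
  have h_eq : minkowskiDiff P Q + Q = P := by
    refine hP.eq_of_subset_of_measureReal_le (μ := μ) (hD.isCompact.add hQ.isCompact)
      minkowskiDiff_add_subset ?_
    rw [← measureRoot_pow, ← measureRoot_pow]
    exact pow_le_pow_left₀ measureRoot_nonneg (by linarith) _
  have h_homothetic : IsHomothetic Q (minkowskiDiff P Q) := by
    rw [← hQ.measureRoot_add_eq_iff (μ := μ) hD, add_comm]
    linarith
  exact h_eq ▸ h_homothetic.add_right hQ.convex

theorem IsConvexBody.measureRoot_minkowskiDiff_interior_of_isHomothetic (hQ : IsConvexBody Q)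
    (h : IsHomothetic Q P) : measureRoot μ (minkowskiDiff (interior P) Q) =
      max (measureRoot μ P - measureRoot μ Q) 0 := by
  obtain ⟨z, s, hs, rfl⟩ := h
  have hP : IsConvexBody (z +ᵥ s • Q) := (hQ.smul hs.ne').vadd z
  refine (measureRoot_minkowskiDiff_interior_le hP.isCompact hQ.isCompact hQ.nonempty).antisymm
    (max_le ?_ measureRoot_nonneg)
  rw [measureRoot_vadd, measureRoot_smul hs.le]
  rcases le_or_gt s 1 with hs_le | hs_gt
  · have := mul_le_of_le_one_left (measureRoot_nonneg (μ := μ) (A := Q)) hs_le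
    exact (sub_nonpos.2 this).trans measureRoot_nonneg
  calc s * measureRoot μ Q - measureRoot μ Q
      = measureRoot μ (z +ᵥ (s - 1) • interior Q) := by
        rw [measureRoot_vadd, measureRoot_smul (sub_nonneg.2 hs_gt.le), hQ.measureRoot_interior]
        ring
    _ ≤ measureRoot μ (minkowskiDiff (interior (z +ᵥ s • Q)) Q) := by
        refine measureRoot_mono (vadd_smul_interior_subset_minkowskiDiff hQ.convex z hs_gt) ?_
        exact measure_ne_top_of_subset (minkowskiDiff_mono_left interior_subset)
          (isCompact_minkowskiDiff hP.isCompact hP.isCompact.isClosed hQ.nonempty).measure_lt_top.ne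

end MinkowskiDifferenceVolume

section BoundInequality

theorem mul_sq_sum_lt_sum_mul_sum {ι : Type*} {s : Finset ι} {w p q : ι → ℝ} {c : ℝ}
    (hw : ∀ i ∈ s, 0 ≤ w i) (hq : ∀ i ∈ s, 0 < q i) (hc : 0 < c) (hpq : ∀ i ∈ s, p i * q i = c)
    (h : ∃ i ∈ s, ∃ j ∈ s, 0 < w i ∧ 0 < w j ∧ p i ≠ p j) :
    c * (∑ i ∈ s, w i) ^ 2 < (∑ i ∈ s, w i * p i) * ∑ i ∈ s, w i * q i := by
  obtain ⟨i, hi, j, hj, hwi, hwj, hp⟩ := h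
  set W := ∑ i ∈ s, w i
  set S := ∑ i ∈ s, w i * p i
  set R := ∑ i ∈ s, w i * q i
  have hR : 0 < R := Finset.sum_pos' (fun k hk ↦ mul_nonneg (hw k hk) (hq k hk).le)
    ⟨i, hi, mul_pos hwi (hq i hi)⟩
  obtain ⟨k, hk, hwk, hpk⟩ : ∃ k ∈ s, 0 < w k ∧ R * p k - c * W ≠ 0 := by
    by_contra! h_all
    exact hp (mul_left_cancel₀ hR.ne'
      ((sub_eq_zero.1 (h_all i hi hwi)).trans (sub_eq_zero.1 (h_all j hj hwj)).symm))
  have h_pos : 0 < ∑ i ∈ s, w i * (R * p i - c * W) ^ 2 * q i :=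
    Finset.sum_pos' (fun l hl ↦ mul_nonneg (mul_nonneg (hw l hl) (sq_nonneg _)) (hq l hl).le)
      ⟨k, hk, by have := hq k hk; positivity⟩
  have h_eq : ∑ i ∈ s, w i * (R * p i - c * W) ^ 2 * q i = c * R * (S * R - c * W ^ 2) :=
    calc ∑ i ∈ s, w i * (R * p i - c * W) ^ 2 * q i
        = ∑ i ∈ s, (R ^ 2 * c * (w i * p i) - 2 * R * c ^ 2 * W * w i
            + c ^ 2 * W ^ 2 * (w i * q i)) := by
          refine Finset.sum_congr rfl fun l hl ↦ ?_
          linear_combination (w l * R ^ 2 * p l - 2 * w l * R * c * W) * hpq l hl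
      _ = R ^ 2 * c * S - 2 * R * c ^ 2 * W * W + c ^ 2 * W ^ 2 * R := by
          rw [Finset.sum_add_distrib, Finset.sum_sub_distrib, ← Finset.mul_sum, ← Finset.mul_sum,
            ← Finset.mul_sum]
      _ = c * R * (S * R - c * W ^ 2) := by ring
  exact sub_pos.1 (pos_of_mul_pos_right (h_eq ▸ h_pos) (by positivity))

theorem map_add_map_le_of_add_eq_add {s : Set ℝ} {f : ℝ → ℝ} (hf : ConvexOn ℝ s f)
    {u v x y : ℝ} (hx : x ∈ s) (hy : y ∈ s) (hxu : x ≤ u) (huy : u ≤ y) (h : u + v = x + y) :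
    f u + f v ≤ f x + f y := by
  obtain ⟨r, t, hr, ht, hrt, rfl⟩ := Icc_subset_segment (𝕜 := ℝ) ⟨hxu, huy⟩
  have hv : v = t • x + r • y := by
    simp only [smul_eq_mul] at h ⊢
    linear_combination h - (x + y) * hrt
  have hu_le := hf.2 hx hy hr ht hrt
  have hv_le := hf.2 hx hy ht hr ((add_comm t r).trans hrt)
  rw [← hv] at hv_le
  simp only [smul_eq_mul] at hu_le hv_le ⊢
  linear_combination hu_le + hv_le + (f x + f y) * hrt

/-- The sharp lower bound for the volume of `∂P + ∂Q` in dimension `n`, as a function of the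
`n`-th roots `x` and `y` of the volumes of the convex bodies `P` and `Q`. -/
def bbmBound (n : ℕ) (x y : ℝ) : ℝ :=
  (x + y) ^ n - |x - y| ^ n

variable {n : ℕ} {a b k t x y x' y' : ℝ}

theorem bbmBound_comm (n : ℕ) (x y : ℝ) : bbmBound n x y = bbmBound n y x := by
  rw [bbmBound, bbmBound, add_comm, abs_sub_comm]

theorem bbmBound_two (x y : ℝ) : bbmBound 2 x y = 4 * (x * y) := by
  rw [bbmBound, sq_abs]
  ring

theorem bbmBound_mul_left {c : ℝ} (hc : 0 ≤ c) (n : ℕ) (x y : ℝ) :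
    bbmBound n (c * x) (c * y) = c ^ n * bbmBound n x y := by
  rw [bbmBound, bbmBound, ← mul_add, ← mul_sub, abs_mul, abs_of_nonneg hc, mul_pow, mul_pow,
    mul_sub]

theorem bbmBound_self_one_sub (n : ℕ) (l : ℝ) : bbmBound n l (1 - l) = 1 - |1 - 2 * l| ^ n := by
  rw [bbmBound, add_sub_cancel, one_pow, abs_sub_comm]
  ring_nf

theorem bbmBound_pos (hn : n ≠ 0) (hx : 0 < x) (hy : 0 < y) : 0 < bbmBound n x y :=
  sub_pos.2 (pow_lt_pow_left₀ (abs_lt.2 ⟨by linarith, by linarith⟩) (abs_nonneg _) hn)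

theorem bbmBound_le_of_mul_eq_mul (hn : 2 ≤ n) (hx : 0 ≤ x) (hy : 0 ≤ y)
    (h_mul : x * y = x' * y') (h_add : x + y ≤ x' + y') : bbmBound n x y ≤ bbmBound n x' y' := by
  have h_rpow {r : ℝ} (hr : 0 ≤ r) : (r ^ 2) ^ (n / 2 : ℝ) = r ^ n := by
    rw [← Real.rpow_natCast, ← Real.rpow_mul hr, Nat.cast_ofNat, mul_div_cancel₀ _ two_ne_zero,
      Real.rpow_natCast]
  have h_convex : ConvexOn ℝ (Ici 0) fun r : ℝ ↦ r ^ (n / 2 : ℝ) :=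
    convexOn_rpow ((one_le_div₀ two_pos).2 (by exact_mod_cast hn))
  have h_le := map_add_map_le_of_add_eq_add h_convex (x := |x - y| ^ 2) (u := (x + y) ^ 2)
    (v := |x' - y'| ^ 2) (y := (x' + y') ^ 2) (mem_Ici.2 (sq_nonneg _)) (mem_Ici.2 (sq_nonneg _))
    (by rw [sq_abs]; nlinarith [mul_nonneg hx hy]) (by gcongr)
    (by simp only [sq_abs]; linear_combination 4 * h_mul)
  simp only [h_rpow (abs_nonneg _), h_rpow (add_nonneg hx hy),
    h_rpow ((add_nonneg hx hy).trans h_add)] at h_le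
  rw [bbmBound, bbmBound]
  linarith

theorem bbmBound_eq_sum (hyx : y ≤ x) (n : ℕ) : bbmBound n x y =
    ∑ j ∈ Finset.range (n + 1), n.choose j * (1 - (-1) ^ j) * (x ^ (n - j) * y ^ j) := by
  rw [bbmBound, abs_of_nonneg (sub_nonneg.2 hyx), add_comm x, sub_eq_neg_add x, add_pow, add_pow,
    ← Finset.sum_sub_distrib]
  refine Finset.sum_congr rfl fun j _ ↦ ?_
  rw [neg_pow]
  ring

theorem choose_mul_one_sub_neg_one_pow_nonneg (n j : ℕ) :
    0 ≤ (n.choose j : ℝ) * (1 - (-1) ^ j) :=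
  mul_nonneg (Nat.cast_nonneg _)
    (sub_nonneg.2 (by rcases neg_one_pow_eq_or ℝ j with h | h <;> simp [h]))

/- Cauchy–Schwarz for the expansion `bbmBound_eq_sum`, strict because its terms `j = 1` and `j = 3`
are not proportional. -/
theorem mul_pow_mul_sq_bbmBound_lt_of_mul_le_mul (hn : 3 ≤ n) (hb : 0 < b) (hab : b < a)
    (ht : 0 < t) (hkt : t < k) (h : b * k ≤ a * t) :
    (k * t) ^ n * bbmBound n a b ^ 2 <
      bbmBound n (a * k) (b * t) * bbmBound n (a * t) (b * k) := by
  have ha : 0 < a := hb.trans hab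
  have hk : 0 < k := ht.trans hkt
  let w : ℕ → ℝ := fun j ↦ n.choose j * (1 - (-1) ^ j) * (a ^ (n - j) * b ^ j)
  have hw_pos {j : ℕ} (hj : j ≤ n) (h_odd : Odd j) : 0 < w j := by
    have := Nat.choose_pos hj
    simp only [w, h_odd.neg_one_pow, sub_neg_eq_add]
    positivity
  have h_prod : ∀ j ∈ Finset.range (n + 1),
      k ^ (n - j) * t ^ j * (t ^ (n - j) * k ^ j) = (k * t) ^ n := fun j hj ↦
    calc k ^ (n - j) * t ^ j * (t ^ (n - j) * k ^ j) = (k * t) ^ (n - j) * (k * t) ^ j := by ring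
      _ = (k * t) ^ n := pow_sub_mul_pow _ (Finset.mem_range_succ_iff.1 hj)
  have h_ne : k ^ (n - 1) * t ^ 1 ≠ k ^ (n - 3) * t ^ 3 := by
    have h_sq : t ^ 2 < k ^ 2 := by gcongr
    rw [show n - 1 = n - 3 + 2 by omega, pow_add, mul_assoc, pow_succ' t 2, mul_comm _ (t ^ 1),
      pow_one]
    exact (by gcongr : k ^ (n - 3) * (t * t ^ 2) < k ^ (n - 3) * (t * k ^ 2)).ne'
  have h_lt := mul_sq_sum_lt_sum_mul_sum (w := w)
    (fun j _ ↦ mul_nonneg (choose_mul_one_sub_neg_one_pow_nonneg n j) (by positivity))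
    (fun j _ ↦ by positivity) (by positivity) h_prod
    ⟨1, by simp; omega, 3, by simp; omega, hw_pos (by omega) (by decide), hw_pos hn (by decide),
      h_ne⟩
  convert h_lt using 2
  · rw [bbmBound_eq_sum hab.le]
  · rw [bbmBound_eq_sum (by gcongr)]
    exact Finset.sum_congr rfl fun j _ ↦ by simp only [w]; ring
  · rw [bbmBound_eq_sum h]
    exact Finset.sum_congr rfl fun j _ ↦ by simp only [w]; ring

theorem mul_pow_mul_sq_bbmBound_le (hn : 2 ≤ n) (ha : 0 < a) (hb : 0 < b) (hk : 0 < k)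
    (ht : 0 < t) (h : k * t * (a + b) ^ 2 ≤ a * b * (k + t) ^ 2) :
    (k * t) ^ n * bbmBound n a b ^ 2 ≤ (a * b) ^ n * bbmBound n k t ^ 2 := by
  set c := √(k * t)
  set d := √(a * b)
  have hc : 0 ≤ c := Real.sqrt_nonneg _
  have hd : 0 ≤ d := Real.sqrt_nonneg _
  have hc_sq : c ^ 2 = k * t := Real.sq_sqrt (by positivity)
  have hd_sq : d ^ 2 = a * b := Real.sq_sqrt (by positivity)
  have h_add : c * a + c * b ≤ d * k + d * t := by
    refine le_of_sq_le_sq ?_ (by positivity)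
    rw [← mul_add, ← mul_add, mul_pow, mul_pow, hc_sq, hd_sq]
    exact h
  have h_le : c ^ n * bbmBound n a b ≤ d ^ n * bbmBound n k t := by
    rw [← bbmBound_mul_left hc, ← bbmBound_mul_left hd]
    exact bbmBound_le_of_mul_eq_mul hn (by positivity) (by positivity)
      (by linear_combination a * b * hc_sq - k * t * hd_sq) h_add
  calc (k * t) ^ n * bbmBound n a b ^ 2 = (c ^ n * bbmBound n a b) ^ 2 := by rw [← hc_sq]; ring
    _ ≤ (d ^ n * bbmBound n k t) ^ 2 :=
        pow_le_pow_left₀ (mul_nonneg (by positivity) (bbmBound_pos (by omega) ha hb).le) h_le 2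
    _ = (a * b) ^ n * bbmBound n k t ^ 2 := by rw [← hd_sq]; ring

theorem mul_pow_mul_sq_bbmBound_lt (hn : 3 ≤ n) (ha : 0 < a) (hb : 0 < b) (hab : a ≠ b)
    (hk : 0 < k) (ht : 0 < t) (hkt : k ≠ t) :
    (k * t) ^ n * bbmBound n a b ^ 2 <
      bbmBound n (a * k) (b * t) * bbmBound n (a * t) (b * k) := by
  wlog h_ba : b < a generalizing a b
  · rw [bbmBound_comm n a b, bbmBound_comm n (a * k), bbmBound_comm n (a * t),
      mul_comm (bbmBound ..)]
    exact this hb ha hab.symm (hab.lt_of_le (not_lt.1 h_ba))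
  wlog h_tk : t < k generalizing k t
  · rw [mul_comm k, mul_comm (bbmBound ..)]
    exact this ht hk hkt.symm (hkt.lt_of_le (not_lt.1 h_tk))
  rcases le_total (b * k) (a * t) with h | h
  · exact mul_pow_mul_sq_bbmBound_lt_of_mul_le_mul hn hb h_ba ht h_tk h
  · have h_ratio : k * t * (a + b) ^ 2 ≤ a * b * (k + t) ^ 2 := by
      have : b * t ≤ a * k := by gcongr
      nlinarith [mul_nonneg (sub_nonneg.2 h) (sub_nonneg.2 this)]
    calc (k * t) ^ n * bbmBound n a b ^ 2
        ≤ (a * b) ^ n * bbmBound n k t ^ 2 :=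
          mul_pow_mul_sq_bbmBound_le (by omega) ha hb hk ht h_ratio
      _ < bbmBound n (k * a) (t * b) * bbmBound n (k * b) (t * a) :=
          mul_pow_mul_sq_bbmBound_lt_of_mul_le_mul hn ht h_tk hb h_ba (by linarith)
      _ = bbmBound n (a * k) (b * t) * bbmBound n (a * t) (b * k) := by
          rw [mul_comm k a, mul_comm t b, bbmBound_comm n (k * b), mul_comm t a, mul_comm k b]

theorem bbmBound_mul_bbmBound_eq_of_eq_two_or_eq (h : n = 2 ∨ k = t) (hk : 0 ≤ k) :
    bbmBound n (a * k) (b * t) * bbmBound n (a * t) (b * k) =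
      (k * t) ^ n * bbmBound n a b ^ 2 := by
  rcases h with rfl | rfl
  · simp only [bbmBound_two]
    ring
  · rw [mul_comm a, mul_comm b, bbmBound_mul_left hk]
    ring

theorem bbmBound_mul_bbmBound_eq_iff (hn : 2 ≤ n) (ha : 0 < a) (hb : 0 < b) (hab : a ≠ b)
    (hk : 0 < k) (ht : 0 < t) :
    bbmBound n (a * k) (b * t) * bbmBound n (a * t) (b * k) = (k * t) ^ n * bbmBound n a b ^ 2 ↔
      n = 2 ∨ k = t := by
  refine ⟨fun h ↦ ?_, fun h ↦ bbmBound_mul_bbmBound_eq_of_eq_two_or_eq h hk.le⟩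
  by_contra! h_ne
  exact (mul_pow_mul_sq_bbmBound_lt (by omega) ha hb hab hk ht h_ne.2).ne' h

theorem mul_pow_mul_sq_bbmBound_le_bbmBound_mul_bbmBound (hn : 2 ≤ n) (ha : 0 < a) (hb : 0 < b)
    (hab : a ≠ b) (hk : 0 < k) (ht : 0 < t) :
    (k * t) ^ n * bbmBound n a b ^ 2 ≤
      bbmBound n (a * k) (b * t) * bbmBound n (a * t) (b * k) := by
  by_cases h : n = 2 ∨ k = t
  · exact (bbmBound_mul_bbmBound_eq_of_eq_two_or_eq h hk.le).ge
  · push Not at h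
    exact (mul_pow_mul_sq_bbmBound_lt (by omega) ha hb hab hk ht h.2).le

theorem max_sub_pow_add_max_sub_pow (hn : n ≠ 0) (x y : ℝ) :
    max (x - y) 0 ^ n + max (y - x) 0 ^ n = |x - y| ^ n := by
  wlog h : x ≤ y generalizing x y
  · rw [add_comm, abs_sub_comm, this y x (le_of_not_ge h)]
  rw [max_eq_right (sub_nonpos.2 h), max_eq_left (sub_nonneg.2 h), zero_pow hn, zero_add,
    abs_sub_comm, abs_of_nonneg (sub_nonneg.2 h)]

end BoundInequality

section FrontierSumVolume

variable {E : Type*} [NormedAddCommGroup E] [NormedSpace ℝ E] {P Q : Set E}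

theorem frontier_smul_set {a : ℝ} (ha : a ≠ 0) (A : Set E) :
    frontier (a • A) = a • frontier A := by
  rw [frontier, closure_smul₀' ha, interior_smul₀ ha, frontier, smul_set_sdiff₀ ha]

variable [FiniteDimensional ℝ E] [Nontrivial E] [MeasurableSpace E] [BorelSpace E]
  {μ : Measure E} [μ.IsAddHaarMeasure]

theorem IsHomothetic.isCentrallySymmetric_of_neg (h : IsHomothetic P (-P))
    (hP : 0 < measureRoot μ P) : IsCentrallySymmetric P :=
  h.exists_eq_vadd_of_measureRoot_eq hP measureRoot_neg.symm

theorem measureRoot_minkowskiDiff_interior_neg_le (hP : IsConvexBody P) (hQ : IsConvexBody Q) :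
    measureRoot μ (minkowskiDiff (interior P) (-Q)) ≤ max (measureRoot μ P - measureRoot μ Q) 0 :=
  (measureRoot_minkowskiDiff_interior_le hP.isCompact hQ.neg.isCompact hQ.neg.nonempty).trans_eq
    (by rw [measureRoot_neg])

theorem IsConvexBody.measureReal_frontier_add_frontier_eq_measureRoot (hP : IsConvexBody P)
    (hQ : IsConvexBody Q) (hE : 1 < Module.rank ℝ E) :
    μ.real (frontier P + frontier Q) = measureRoot μ (P + Q) ^ finrank ℝ E -
      (measureRoot μ (minkowskiDiff (interior P) (-Q)) ^ finrank ℝ E +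
        measureRoot μ (minkowskiDiff (interior Q) (-P)) ^ finrank ℝ E) := by
  simp only [measureRoot_pow, hP.measureReal_frontier_add_frontier hQ hE]

theorem IsConvexBody.bbmBound_le_measureReal_frontier_add_frontier (hP : IsConvexBody P)
    (hQ : IsConvexBody Q) (hE : 1 < Module.rank ℝ E) :
    bbmBound (finrank ℝ E) (measureRoot μ P) (measureRoot μ Q) ≤
      μ.real (frontier P + frontier Q) := by
  rw [hP.measureReal_frontier_add_frontier_eq_measureRoot hQ hE, bbmBound,
    ← max_sub_pow_add_max_sub_pow finrank_pos.ne']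
  gcongr
  · exact add_nonneg measureRoot_nonneg measureRoot_nonneg
  · exact measureRoot_add_le hP.isCompact hQ.isCompact hP.nonempty hQ.nonempty
  · exact measureRoot_nonneg
  · exact measureRoot_minkowskiDiff_interior_neg_le hP hQ
  · exact measureRoot_nonneg
  · exact measureRoot_minkowskiDiff_interior_neg_le hQ hP

theorem IsConvexBody.measureReal_frontier_add_frontier_of_isHomothetic (hP : IsConvexBody P)
    (hQ : IsConvexBody Q) (hE : 1 < Module.rank ℝ E) (hPQ : IsHomothetic P Q)
    (hP_symm : IsCentrallySymmetric P) : μ.real (frontier P + frontier Q) =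
      bbmBound (finrank ℝ E) (measureRoot μ P) (measureRoot μ Q) := by
  rw [hP.measureReal_frontier_add_frontier_eq_measureRoot hQ hE, bbmBound,
    ← max_sub_pow_add_max_sub_pow finrank_pos.ne', measureRoot_add_of_isHomothetic hP.convex hPQ,
    hQ.neg.measureRoot_minkowskiDiff_interior_of_isHomothetic
      (hPQ.neg.symm.trans hP_symm.isHomothetic_neg.symm),
    hP.neg.measureRoot_minkowskiDiff_interior_of_isHomothetic
      (hP_symm.isHomothetic_neg.symm.trans hPQ), measureRoot_neg, measureRoot_neg]

theorem IsConvexBody.isHomothetic_and_isCentrallySymmetric_of_measureReal_eq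
    (hP : IsConvexBody P) (hQ : IsConvexBody Q) (hE : 1 < Module.rank ℝ E)
    (h_ne : measureRoot μ P ≠ measureRoot μ Q)
    (h : μ.real (frontier P + frontier Q) =
      bbmBound (finrank ℝ E) (measureRoot μ P) (measureRoot μ Q)) :
    IsHomothetic P Q ∧ IsCentrallySymmetric P := by
  wlog h_lt : measureRoot μ Q < measureRoot μ P generalizing P Q
  · obtain ⟨hQP, hQ_symm⟩ := this hQ hP h_ne.symm (by rwa [add_comm, bbmBound_comm])
      (h_ne.lt_of_le (not_lt.1 h_lt))
    exact ⟨hQP.symm, hQP.isCentrallySymmetric hQ_symm⟩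
  have hn : finrank ℝ E ≠ 0 := finrank_pos.ne'
  rw [hP.measureReal_frontier_add_frontier_eq_measureRoot hQ hE, bbmBound,
    ← max_sub_pow_add_max_sub_pow hn] at h
  have h_add := pow_le_pow_left₀ (add_nonneg measureRoot_nonneg measureRoot_nonneg)
    (measureRoot_add_le (μ := μ) hP.isCompact hQ.isCompact hP.nonempty hQ.nonempty) (finrank ℝ E)
  have h_PQ := pow_le_pow_left₀ measureRoot_nonneg
    (measureRoot_minkowskiDiff_interior_neg_le (μ := μ) hP hQ) (finrank ℝ E)
  have h_QP := pow_le_pow_left₀ measureRoot_nonneg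
    (measureRoot_minkowskiDiff_interior_neg_le (μ := μ) hQ hP) (finrank ℝ E)
  have hPQ : IsHomothetic P Q := (hP.measureRoot_add_eq_iff (μ := μ) hQ).1 <|
    (pow_left_inj₀ measureRoot_nonneg (add_nonneg measureRoot_nonneg measureRoot_nonneg) hn).1
      (by linarith)
  have h_diff : measureRoot μ (minkowskiDiff (interior P) (-Q)) =
      measureRoot μ P - measureRoot μ (-Q) := by
    rw [measureRoot_neg, ← max_eq_left (sub_nonneg.2 h_lt.le)]
    exact (pow_left_inj₀ measureRoot_nonneg (le_max_right _ _) hn).1 (by linarith)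
  have hQP_neg : IsHomothetic (-Q) P :=
    hP.isHomothetic_of_measureRoot_minkowskiDiff_interior hQ.neg (by rwa [measureRoot_neg]) h_diff
  exact ⟨hPQ, (hPQ.neg.trans hQP_neg).symm.isCentrallySymmetric_of_neg (μ := μ) hP.measureRoot_pos⟩

end FrontierSumVolume

section BoundaryBrunnMinkowski

variable {E : Type*} [NormedAddCommGroup E] [NormedSpace ℝ E] {K T : Set E} {a b : ℝ}

theorem exists_homothets_iff (hK : IsConvexBody K) :
    (∃ C, IsConvexBody C ∧ IsCentrallySymmetric C ∧ IsHomothetic C K ∧ IsHomothetic C T) ↔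
      IsHomothetic K T ∧ IsCentrallySymmetric K := by
  refine ⟨?_, fun ⟨hKT, hK_symm⟩ ↦ ⟨K, hK, hK_symm, .refl K, hKT⟩⟩
  rintro ⟨C, -, hC_symm, hCK, hCT⟩
  exact ⟨hCK.symm.trans hCT, hCK.isCentrallySymmetric hC_symm⟩

variable [FiniteDimensional ℝ E] [Nontrivial E] [MeasurableSpace E] [BorelSpace E]
  {μ : Measure E} [μ.IsAddHaarMeasure]

namespace IsConvexBody

theorem bbmBound_le_measureReal_smul_frontier_add_smul_frontier (hK : IsConvexBody K)
    (hT : IsConvexBody T) (hE : 1 < Module.rank ℝ E) (ha : 0 < a) (hb : 0 < b) :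
    bbmBound (finrank ℝ E) (a * measureRoot μ K) (b * measureRoot μ T) ≤
      μ.real (a • frontier K + b • frontier T) := by
  rw [← frontier_smul_set ha.ne', ← frontier_smul_set hb.ne', ← measureRoot_smul ha.le,
    ← measureRoot_smul hb.le]
  exact (hK.smul ha.ne').bbmBound_le_measureReal_frontier_add_frontier (hT.smul hb.ne') hE

theorem measureReal_smul_frontier_add_smul_frontier_of_isHomothetic (hK : IsConvexBody K)
    (hT : IsConvexBody T) (hE : 1 < Module.rank ℝ E) (ha : 0 < a) (hb : 0 < b)
    (hKT : IsHomothetic K T) (hK_symm : IsCentrallySymmetric K) :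
    μ.real (a • frontier K + b • frontier T) =
      bbmBound (finrank ℝ E) (a * measureRoot μ K) (b * measureRoot μ T) := by
  have hK_smul := IsHomothetic.smul_right K ha
  rw [← frontier_smul_set ha.ne', ← frontier_smul_set hb.ne', ← measureRoot_smul ha.le,
    ← measureRoot_smul hb.le]
  exact (hK.smul ha.ne').measureReal_frontier_add_frontier_of_isHomothetic (hT.smul hb.ne') hE
    (hK_smul.symm.trans (hKT.trans (.smul_right T hb))) (hK_smul.isCentrallySymmetric hK_symm)

theorem isHomothetic_and_isCentrallySymmetric_of_measureReal_smul_eq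
    (hK : IsConvexBody K) (hT : IsConvexBody T) (hE : 1 < Module.rank ℝ E) (ha : 0 < a)
    (hb : 0 < b) (h_ne : a * measureRoot μ K ≠ b * measureRoot μ T)
    (h : μ.real (a • frontier K + b • frontier T) =
      bbmBound (finrank ℝ E) (a * measureRoot μ K) (b * measureRoot μ T)) :
    IsHomothetic K T ∧ IsCentrallySymmetric K := by
  have hK_smul := IsHomothetic.smul_right K ha
  rw [← frontier_smul_set ha.ne', ← frontier_smul_set hb.ne', ← measureRoot_smul ha.le,
    ← measureRoot_smul hb.le] at h
  rw [← measureRoot_smul ha.le, ← measureRoot_smul hb.le] at h_ne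
  obtain ⟨h_hom, h_symm⟩ :=
    (hK.smul ha.ne').isHomothetic_and_isCentrallySymmetric_of_measureReal_eq (hT.smul hb.ne') hE
      h_ne h
  exact ⟨(hK_smul.trans h_hom).trans (IsHomothetic.smul_right T hb).symm,
    hK_smul.symm.isCentrallySymmetric h_symm⟩

theorem eq_bbmBound_of_measureReal_mul_measureReal_eq (hK : IsConvexBody K) (hT : IsConvexBody T)
    (hn : 2 ≤ finrank ℝ E) (ha : 0 < a) (hb : 0 < b) (hab : a ≠ b)
    (h : μ.real (a • frontier K + b • frontier T) * μ.real (a • frontier T + b • frontier K) =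
      (measureRoot μ K * measureRoot μ T) ^ finrank ℝ E * bbmBound (finrank ℝ E) a b ^ 2) :
    μ.real (a • frontier K + b • frontier T) =
        bbmBound (finrank ℝ E) (a * measureRoot μ K) (b * measureRoot μ T) ∧
      μ.real (a • frontier T + b • frontier K) =
        bbmBound (finrank ℝ E) (a * measureRoot μ T) (b * measureRoot μ K) := by
  have hE : 1 < Module.rank ℝ E := lt_rank_of_lt_finrank hn
  have hk : 0 < measureRoot μ K := hK.measureRoot_pos
  have ht : 0 < measureRoot μ T := hT.measureRoot_pos
  have hX := hK.bbmBound_le_measureReal_smul_frontier_add_smul_frontier (μ := μ) hT hE ha hb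
  have hY := hT.bbmBound_le_measureReal_smul_frontier_add_smul_frontier (μ := μ) hK hE ha hb
  have hX_pos : 0 < bbmBound (finrank ℝ E) (a * measureRoot μ K) (b * measureRoot μ T) :=
    bbmBound_pos (by omega) (by positivity) (by positivity)
  have hY_pos : 0 < bbmBound (finrank ℝ E) (a * measureRoot μ T) (b * measureRoot μ K) :=
    bbmBound_pos (by omega) (by positivity) (by positivity)
  have h_prod := (mul_le_mul hX hY hY_pos.le measureReal_nonneg).antisymm <|
    h.trans_le (mul_pow_mul_sq_bbmBound_le_bbmBound_mul_bbmBound hn ha hb hab hk ht)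
  obtain ⟨hX_eq, hY_eq⟩ :=
    (mul_eq_mul_iff_eq_and_eq_of_pos hX hY hX_pos (hY_pos.trans_le hY)).1 h_prod
  exact ⟨hX_eq.symm, hY_eq.symm⟩

theorem measureReal_mul_measureReal_eq_iff (hK : IsConvexBody K) (hT : IsConvexBody T)
    (hn : 2 ≤ finrank ℝ E) (ha : 0 < a) (hb : 0 < b) (hab : a ≠ b) :
    μ.real (a • frontier K + b • frontier T) * μ.real (a • frontier T + b • frontier K) =
        μ.real K * μ.real T * bbmBound (finrank ℝ E) a b ^ 2 ↔
      IsHomothetic K T ∧ IsCentrallySymmetric K ∧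
        (finrank ℝ E = 2 ∨ measureRoot μ K = measureRoot μ T) := by
  have hE : 1 < Module.rank ℝ E := lt_rank_of_lt_finrank hn
  have hk : 0 < measureRoot μ K := hK.measureRoot_pos
  have ht : 0 < measureRoot μ T := hT.measureRoot_pos
  rw [← bbmBound_mul_bbmBound_eq_iff hn ha hb hab hk ht, ← measureRoot_pow (A := K),
    ← measureRoot_pow (A := T), ← mul_pow, ← and_assoc]
  refine ⟨fun h ↦ ?_, fun ⟨⟨hKT, hK_symm⟩, h_bound⟩ ↦ ?_⟩
  · obtain ⟨hX, hY⟩ := hK.eq_bbmBound_of_measureReal_mul_measureReal_eq hT hn ha hb hab h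
    refine ⟨?_, by rw [← h, hX, hY]⟩
    by_cases h_eq : a * measureRoot μ K = b * measureRoot μ T
    · have h_ne : a * measureRoot μ T ≠ b * measureRoot μ K := fun h_eq' ↦
        hab (mul_right_cancel₀ (add_pos hk ht).ne' (by linarith))
      obtain ⟨hTK, hT_symm⟩ := hT.isHomothetic_and_isCentrallySymmetric_of_measureReal_smul_eq
        hK hE ha hb h_ne hY
      exact ⟨hTK.symm, hTK.isCentrallySymmetric hT_symm⟩
    · exact hK.isHomothetic_and_isCentrallySymmetric_of_measureReal_smul_eq hT hE ha hb h_eq hX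
  · rw [hK.measureReal_smul_frontier_add_smul_frontier_of_isHomothetic hT hE ha hb hKT hK_symm,
      hT.measureReal_smul_frontier_add_smul_frontier_of_isHomothetic hK hE ha hb hKT.symm
        (hKT.isCentrallySymmetric hK_symm), h_bound]

end IsConvexBody

theorem exists_translates_iff (hK : IsConvexBody K) :
    (∃ C, IsConvexBody C ∧ IsCentrallySymmetric C ∧
      (∃ x : E, K = x +ᵥ C) ∧ ∃ y : E, T = y +ᵥ C) ↔
      IsHomothetic K T ∧ IsCentrallySymmetric K ∧ measureRoot μ K = measureRoot μ T := by
  constructor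
  · rintro ⟨C, -, hC_symm, ⟨x, rfl⟩, y, rfl⟩
    exact ⟨(IsHomothetic.vadd_right C x).symm.trans (.vadd_right C y),
      (IsHomothetic.vadd_right C x).isCentrallySymmetric hC_symm,
      by rw [measureRoot_vadd, measureRoot_vadd]⟩
  · rintro ⟨hKT, hK_symm, h_root⟩
    exact ⟨K, hK, hK_symm, ⟨0, (zero_vadd E K).symm⟩,
      hKT.exists_eq_vadd_of_measureRoot_eq hK.measureRoot_pos h_root⟩

end BoundaryBrunnMinkowski

theorem boundary_BBM_equality_cases_general {E : Type*} [NormedAddCommGroup E] [NormedSpace ℝ E]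
    [FiniteDimensional ℝ E] [MeasurableSpace E] [BorelSpace E] (μ : Measure E)
    [μ.IsAddHaarMeasure] (hn : 2 ≤ finrank ℝ E) {K T : Set E} (hK : IsConvexBody K)
    (hT : IsConvexBody T) {l : ℝ} (hl0 : 0 < l) (hl1 : l < 1) (hl : l ≠ 1 / 2) :
    μ.real (l • frontier K + (1 - l) • frontier T) *
        μ.real (l • frontier T + (1 - l) • frontier K) =
      μ.real K * μ.real T * (1 - |1 - 2 * l| ^ finrank ℝ E) ^ 2 ↔
    ((∃ C, IsConvexBody C ∧ IsCentrallySymmetric C ∧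
        (∃ x : E, K = x +ᵥ C) ∧ (∃ y : E, T = y +ᵥ C)) ∨
      (finrank ℝ E = 2 ∧
        ∃ C, IsConvexBody C ∧ IsCentrallySymmetric C ∧ IsHomothetic C K ∧ IsHomothetic C T)) := by
  have : Nontrivial E := nontrivial_of_finrank_pos (R := ℝ) (by omega)
  rw [← bbmBound_self_one_sub, hK.measureReal_mul_measureReal_eq_iff hT hn hl0 (sub_pos.2 hl1)
    (fun h ↦ hl (by linarith)), exists_translates_iff (μ := μ) hK, exists_homothets_iff hK]
  tauto

theorem boundary_BBM_equality_cases (n : ℕ) (hn : 2 ≤ n)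
    (K T : Set (EuclideanSpace ℝ (Fin n)))
    (hK : IsCompact K) (hKconv : Convex ℝ K) (hKint : (interior K).Nonempty)
    (hT : IsCompact T) (hTconv : Convex ℝ T) (hTint : (interior T).Nonempty)
    (l : ℝ) (hl0 : 0 < l) (hl1 : l < 1) (hl : l ≠ 1/2) :
    (volume (l • frontier K + (1 - l) • frontier T)).toReal *
      (volume (l • frontier T + (1 - l) • frontier K)).toReal =
    (volume K).toReal * (volume T).toReal * (1 - |1 - 2*l| ^ n) ^ 2 ↔
    ((∃ C : Set (EuclideanSpace ℝ (Fin n)),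
        IsCompact C ∧ Convex ℝ C ∧ (interior C).Nonempty ∧ (∃ z : EuclideanSpace ℝ (Fin n), -C = z +ᵥ C) ∧
        (∃ x : EuclideanSpace ℝ (Fin n), K = x +ᵥ C) ∧ (∃ y : EuclideanSpace ℝ (Fin n), T = y +ᵥ C)) ∨
      (n = 2 ∧ ∃ C : Set (EuclideanSpace ℝ (Fin n)),
        IsCompact C ∧ Convex ℝ C ∧ (interior C).Nonempty ∧ (∃ z : EuclideanSpace ℝ (Fin n), -C = z +ᵥ C) ∧
        (∃ x : EuclideanSpace ℝ (Fin n), ∃ r : ℝ, 0 < r ∧ K = x +ᵥ r • C) ∧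
        (∃ y : EuclideanSpace ℝ (Fin n), ∃ s : ℝ, 0 < s ∧ T = y +ᵥ s • C))) := by
  simpa only [measureReal_def, finrank_euclideanSpace_fin, isConvexBody_iff, and_assoc,
    IsCentrallySymmetric, IsHomothetic] using
    boundary_BBM_equality_cases_general volume (by simpa using hn) ⟨hK, hKconv, hKint⟩
      ⟨hT, hTconv, hTint⟩ hl0 hl1 hl
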